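/- Let P ∈ ℝ[x] be a polynomial whose coefficient of x is non-Liouville. Then S(X)/X → 1/ζ(2) = 6/π² as X → ∞. -/

import Mathlib

/-!
Small primes are sieved: `d` divides both `x = d y` and `⌊P(x)⌋` exactly when the fractional part of
`P(d y) / d` is less than `1 / d`, so equidistribution of `P(d y) / d` modulo one gives the
set `AP P d X` the density `1 / d ^ 2`, and the sieve yields `∏ (1 - 1 / p ^ 2)`, whose limit is the
Euler product `1 / ζ(2)`. Large primes are discarded with a quantitative form of the same
equidistribution, summed over `p`. Both rest on Weyl sums. A large Weyl sum forces a rational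
approximation `a / q` first to the leading coefficient; expanding the leading phase, of period `q`,
into additive characters of `ℤ / q` lowers the degree and shifts the linear coefficient only by a
fraction of denominator `q`, until the linear coefficient itself is seen to be well approximable.
Since `P(d x) / d` has the same linear coefficient as `P` for every `d`, the assumption that it is
not Liouville gives a power saving uniform in `d`.
-/

open Real Finset

/-- `α` is Liouville: for every `n ∈ ℕ` there are integers `p, q` with `q > 1`
and `|α - p/q| ≤ q^(-n)`. -/
def IsLiouvilleReal (α : ℝ) : Prop :=
  ∀ n : ℕ, ∃ p q : ℤ, 1 < q ∧ |α - (p : ℝ) / (q : ℝ)| ≤ (q : ℝ) ^ (-(n : ℤ))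

open Classical in
/-- The finset of primes `p < z`. -/
noncomputable def primesLt (z : ℝ) : Finset ℕ :=
  (Finset.range ⌈z⌉₊).filter fun p => p.Prime ∧ (p : ℝ) < z

/-- `P_z`, the product of all primes `p < z`. -/
noncomputable def Pz (z : ℝ) : ℕ := ∏ p ∈ primesLt z, p

open Classical in
/-- `S(X)`: the number of naturals `1 ≤ x ≤ X` with `gcd(x, ⌊P(x)⌋) = 1`. -/
noncomputable def S (P : Polynomial ℝ) (X : ℝ) : ℕ :=
  ((Finset.Icc 1 ⌊X⌋₊).filter fun x => Int.gcd (x : ℤ) ⌊P.eval (x : ℝ)⌋ = 1).card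

open Classical in
/-- `A_d(X)`: the set of naturals `1 ≤ x ≤ X` with `d ∣ x` and `d ∣ ⌊P(x)⌋`. -/
noncomputable def AP (P : Polynomial ℝ) (d : ℕ) (X : ℝ) : Finset ℕ :=
  (Finset.Icc 1 ⌊X⌋₊).filter fun x => (d : ℤ) ∣ (x : ℤ) ∧ (d : ℤ) ∣ ⌊P.eval (x : ℝ)⌋

open Classical in
/-- `S(X, z)`: the number of naturals `1 ≤ x ≤ X` with `gcd(gcd(x, ⌊P(x)⌋), P_z) = 1`. -/
noncomputable def S2 (P : Polynomial ℝ) (X z : ℝ) : ℕ :=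
  ((Finset.Icc 1 ⌊X⌋₊).filter fun x =>
    Nat.gcd (Int.gcd (x : ℤ) ⌊P.eval (x : ℝ)⌋) (Pz z) = 1).card

/-- `z = X ^ (c / log log X)` with `c = 1/(2(A+1))`. -/
noncomputable def zf (A X : ℝ) : ℝ := X ^ ((1 / (2 * (A + 1))) / Real.log (Real.log X))

section AdditiveCharacter

open scoped FourierTransform

lemma fourierChar_intCast (n : ℤ) : (𝐞 (n : ℝ) : ℂ) = 1 := by
  rw [Real.fourierChar_apply, Complex.exp_eq_one_iff]
  exact ⟨n, by push_cast; ring⟩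

lemma fourierChar_add (s t : ℝ) : (𝐞 (s + t) : ℂ) = 𝐞 s * 𝐞 t := by
  rw [AddChar.map_add_eq_mul, Circle.coe_mul]

lemma fourierChar_add_intCast (t : ℝ) (n : ℤ) : (𝐞 (t + n) : ℂ) = 𝐞 t := by
  rw [fourierChar_add, fourierChar_intCast, mul_one]

lemma fourierChar_natCast_mul (n : ℕ) (t : ℝ) : (𝐞 (n * t) : ℂ) = (𝐞 t : ℂ) ^ n := by
  rw [← nsmul_eq_mul, AddChar.map_nsmul_eq_pow, Circle.coe_pow]

lemma norm_fourierChar_sub_one (t : ℝ) : ‖(𝐞 t : ℂ) - 1‖ = 2 * |sin (π * t)| := by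
  rw [Real.fourierChar_apply, mul_comm, Complex.norm_exp_I_mul_ofReal_sub_one, norm_mul,
    Real.norm_eq_abs, Real.norm_eq_abs, abs_two]
  congr 3
  ring

lemma norm_fourierChar_sub_one_le (t : ℝ) : ‖(𝐞 t : ℂ) - 1‖ ≤ 2 * π * |t| := by
  have h : |sin (π * t)| ≤ |π * t| := abs_sin_le_abs
  rw [abs_mul, abs_of_pos pi_pos] at h
  rw [norm_fourierChar_sub_one]
  linarith

lemma le_norm_fourierChar_sub_one (t : ℝ) : 4 * |t - round t| ≤ ‖(𝐞 t : ℂ) - 1‖ := by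
  have hround : (𝐞 t : ℂ) = 𝐞 (t - round t) := by
    rw [← fourierChar_add_intCast (t - round t) (round t), sub_add_cancel]
  have habs : |π * (t - round t)| = π * |t - round t| := by rw [abs_mul, abs_of_pos pi_pos]
  have h := Real.mul_abs_le_abs_sin (x := π * (t - round t))
    (by rw [habs]; nlinarith [abs_sub_round t, pi_pos])
  rw [habs, ← mul_assoc, div_mul_cancel₀ _ pi_ne_zero] at h
  rw [hround, norm_fourierChar_sub_one]
  linarith

end AdditiveCharacter

section RationalApproximation

/-- Some `q ∈ [1, Q]` has `qβ` within `Q / L` of an integer. A single bound `Q` controls both the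
denominator and the accuracy, so that a loss in an argument only ever replaces `Q` by something
larger. -/
def HasRatApprox (β : ℝ) (Q : ℕ) (L : ℝ) : Prop :=
  ∃ q : ℕ, 1 ≤ q ∧ q ≤ Q ∧ ∃ a : ℤ, |q * β - a| * L ≤ Q

variable {β L : ℝ} {Q : ℕ}

lemma HasRatApprox.mono {Q' : ℕ} (hβ : HasRatApprox β Q L) (hQ : Q ≤ Q') :
    HasRatApprox β Q' L := by
  obtain ⟨q, hq, hqQ, a, ha⟩ := hβ
  exact ⟨q, hq, hqQ.trans hQ, a, ha.trans (by exact_mod_cast hQ)⟩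

lemma HasRatApprox.of_le (β : ℝ) (hQ : 1 ≤ Q) (hL : L ≤ Q) : HasRatApprox β Q L := by
  refine ⟨1, le_rfl, hQ, round β, ?_⟩
  have h := abs_sub_round β
  rw [Nat.cast_one, one_mul]
  nlinarith [abs_nonneg (β - round β), (Nat.cast_nonneg Q : (0 : ℝ) ≤ Q)]

lemma HasRatApprox.exists_abs_sub_div_mul_le (hβ : HasRatApprox β Q L) (hL : 0 ≤ L) :
    ∃ q : ℕ, 1 ≤ q ∧ q ≤ Q ∧ ∃ a : ℤ, |β - a / q| * L ≤ Q := by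
  obtain ⟨q, hq, hqQ, a, ha⟩ := hβ
  refine ⟨q, hq, hqQ, a, le_trans ?_ ha⟩
  have hqr : (1 : ℝ) ≤ q := by exact_mod_cast hq
  have hscale : q * β - a = q * (β - a / q) := by field_simp
  gcongr ?_ * _
  rw [hscale, abs_mul, Nat.abs_cast]
  exact le_mul_of_one_le_left (abs_nonneg _) hqr

lemma HasRatApprox.of_intCast_mul {h : ℤ} (hh : h ≠ 0) (hβ : HasRatApprox (h * β) Q L) :
    HasRatApprox β (h.natAbs * Q) L := by
  obtain ⟨q, hq, hqQ, a, ha⟩ := hβ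
  have hpos : 1 ≤ h.natAbs := Int.natAbs_pos.2 hh
  refine ⟨h.natAbs * q, Nat.mul_pos hpos hq, by gcongr, h.sign * a, ?_⟩
  have habs : |((h.natAbs * q : ℕ) : ℝ) * β - (h.sign * a : ℤ)| = |q * (h * β) - a| := by
    have hnat : (h.natAbs : ℝ) = h.sign * h := by
      rw [Nat.cast_natAbs, ← Int.sign_mul_self_eq_abs, Int.cast_mul]
    have hsign : |(h.sign : ℝ)| = 1 := by exact_mod_cast Int.abs_sign_of_ne_zero hh
    rw [← one_mul |q * (h * β) - a|, ← hsign, ← abs_mul]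
    push_cast
    rw [hnat]
    ring_nf
  rw [habs]
  exact ha.trans (by exact_mod_cast Nat.le_mul_of_pos_left Q hpos)

lemma HasRatApprox.of_add_div {s : ℤ} {q : ℕ} (hq : 1 ≤ q)
    (hβ : HasRatApprox (β + s / q) Q L) : HasRatApprox β (q * Q) L := by
  obtain ⟨r, hr, hrQ, a, ha⟩ := hβ
  refine ⟨q * r, Nat.mul_pos hq hr, by gcongr, q * a - r * s, ?_⟩
  have hq0 : (q : ℝ) ≠ 0 := by positivity
  have habs : |((q * r : ℕ) : ℝ) * β - (q * a - r * s : ℤ)| = q * |r * (β + s / q) - a| := by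
    rw [← abs_of_nonneg (Nat.cast_nonneg (α := ℝ) q), ← abs_mul, Nat.abs_cast]
    congr 1
    push_cast
    field_simp
    ring
  rw [habs, mul_assoc, Nat.cast_mul]
  gcongr

lemma HasRatApprox.le_of_not_isLiouvilleReal {α : ℝ} (hα : ¬ IsLiouvilleReal α) :
    ∃ n : ℕ, ∀ (Q : ℕ) (L : ℝ), HasRatApprox α Q L → L ≤ Q * (2 * Q) ^ n := by
  unfold IsLiouvilleReal at hα
  push Not at hα
  obtain ⟨n, hn⟩ := hα
  refine ⟨n, fun Q L ⟨q, hq, hqQ, a, ha⟩ ↦ ?_⟩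
  have hq1 : (1 : ℝ) ≤ q := by exact_mod_cast hq
  -- `IsLiouvilleReal` wants a denominator `> 1`, hence the fraction `2a / 2q`.
  have hfar := hn (2 * a) (2 * q) (by omega)
  have hdist : |α - ((2 * a : ℤ) : ℝ) / ((2 * q : ℤ) : ℝ)| ≤ |q * α - a| := by
    have hfrac : q * α - a = q * (α - ((2 * a : ℤ) : ℝ) / ((2 * q : ℤ) : ℝ)) := by
      push_cast
      field_simp
    rw [hfrac, abs_mul, Nat.abs_cast]
    exact le_mul_of_one_le_left (abs_nonneg _) hq1
  rcases lt_or_ge L 0 with hL | hL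
  · exact hL.le.trans (by positivity)
  have hpow : (2 * q : ℝ) ^ n ≤ (2 * Q) ^ n := by gcongr
  rw [zpow_neg, zpow_natCast] at hfar
  push_cast at hfar hdist
  calc L = ((2 * q : ℝ) ^ n)⁻¹ * L * (2 * q) ^ n := by field_simp
    _ ≤ |q * α - a| * L * (2 * q) ^ n := by gcongr; exact hfar.le.trans hdist
    _ ≤ Q * (2 * Q) ^ n := by gcongr

end RationalApproximation

section VanDerCorput

open scoped InnerProductSpace

variable {𝕜 E : Type*} [RCLike 𝕜] [NormedAddCommGroup E] [InnerProductSpace 𝕜 E]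

lemma norm_sum_range_sq_add_sum_norm_sq (u : ℕ → E) (M : ℕ) :
    ‖∑ x ∈ range M, u x‖ ^ 2 + ∑ x ∈ range M, ‖u x‖ ^ 2 =
      2 * RCLike.re (∑ x ∈ range M, ∑ y ∈ range (x + 1), ⟪u y, u x⟫_𝕜) := by
  induction M with
  | zero => simp
  | succ M ih =>
    rw [sum_range_succ, sum_range_succ (fun x ↦ ‖u x‖ ^ 2), norm_add_sq (𝕜 := 𝕜),
      sum_range_succ (fun x ↦ ∑ y ∈ range (x + 1), ⟪u y, u x⟫_𝕜), map_add, mul_add, ← ih,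
      sum_range_succ _ M, map_add, inner_self_eq_norm_sq, sum_inner]
    ring

/-- Van der Corput's inequality. -/
lemma norm_sum_range_sq_le (u : ℕ → E) (M : ℕ) :
    ‖∑ x ∈ range M, u x‖ ^ 2 ≤
      2 * ∑ h ∈ range M, ‖∑ y ∈ range (M - h), ⟪u y, u (y + h)⟫_𝕜‖ := by
  have hdiag : ∑ x ∈ range M, ∑ y ∈ range (x + 1), ⟪u y, u x⟫_𝕜 =
      ∑ h ∈ range M, ∑ y ∈ range (M - h), ⟪u y, u (y + h)⟫_𝕜 := by
    rw [← sum_range_diag_flip M fun h y ↦ ⟪u y, u (y + h)⟫_𝕜]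
    refine sum_congr rfl fun x _ ↦ ?_
    rw [← sum_flip]
    refine sum_congr rfl fun y hy ↦ ?_
    rw [Nat.sub_add_cancel (mem_range_succ_iff.1 hy)]
  have hsq := norm_sum_range_sq_add_sum_norm_sq (𝕜 := 𝕜) u M
  have hnorm := (RCLike.re_le_norm _).trans
    (norm_sum_le (range M) fun h ↦ ∑ y ∈ range (M - h), ⟪u y, u (y + h)⟫_𝕜)
  have hpos : 0 ≤ ∑ x ∈ range M, ‖u x‖ ^ 2 := by positivity
  rw [hdiag] at hsq
  linarith

end VanDerCorput

section WeylSum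

open Polynomial
open scoped FourierTransform

/-- The Weyl sum `∑_{0 ≤ y < M} e(f(y))`, where `e(t) = exp(2πit)`. -/
noncomputable def weylSum (f : ℝ[X]) (M : ℕ) : ℂ := ∑ y ∈ range M, 𝐞 (f.eval (y : ℝ))

lemma norm_weylSum_le (f : ℝ[X]) (M : ℕ) : ‖weylSum f M‖ ≤ M := by
  refine (norm_sum_le _ _).trans_eq ?_
  simp only [Circle.norm_coe, sum_const, card_range, nsmul_eq_mul, mul_one]

lemma norm_weylSum_sq_le (f : ℝ[X]) (M : ℕ) :
    ‖weylSum f M‖ ^ 2 ≤ 2 * ∑ h ∈ range M, ‖weylSum (taylor (h : ℝ) f - f) (M - h)‖ := by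
  refine (norm_sum_range_sq_le (𝕜 := ℂ) _ M).trans_eq ?_
  refine congrArg (2 * ·) (sum_congr rfl fun h _ ↦ congrArg _ (sum_congr rfl fun y _ ↦ ?_))
  rw [RCLike.inner_apply, eval_sub, taylor_eval, sub_eq_add_neg, AddChar.map_add_eq_mul,
    AddChar.map_neg_eq_inv, Circle.coe_mul, Circle.coe_inv_eq_conj, Nat.cast_add]

lemma coeff_taylor_of_natDegree_le {R : Type*} [CommRing R] {f : R[X]} {j : ℕ}
    (hf : f.natDegree ≤ j + 1) (r : R) :
    (taylor r f).coeff j = f.coeff j + (j + 1) * r * f.coeff (j + 1) := by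
  have hdeg : (hasseDeriv j f).natDegree < 2 := by
    have := natDegree_hasseDeriv_le f j
    omega
  rw [taylor_coeff, eval_eq_sum_range' hdeg]
  simp only [sum_range_succ, range_zero, sum_empty, hasseDeriv_coeff, zero_add, Nat.choose_self,
    add_comm 1 j, Nat.choose_succ_self_right]
  push_cast
  ring

lemma coeff_taylor_sub_self {R : Type*} [CommRing R] {f : R[X]} {k : ℕ}
    (hf : f.natDegree ≤ k + 1) (r : R) :
    (taylor r f - f).coeff k = (k + 1) * r * f.coeff (k + 1) := by
  rw [coeff_sub, coeff_taylor_of_natDegree_le hf, add_sub_cancel_left]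

lemma natDegree_taylor_sub_self_le {R : Type*} [CommRing R] {f : R[X]} {k : ℕ}
    (hf : f.natDegree ≤ k + 1) (r : R) : (taylor r f - f).natDegree ≤ k := by
  refine natDegree_le_iff_coeff_eq_zero.2 fun n hn ↦ ?_
  rw [coeff_taylor_sub_self (hf.trans (by omega)), coeff_eq_zero_of_natDegree_lt (by omega),
    mul_zero]

end WeylSum

section Pigeonhole

lemma le_mul_card_filter_of_sq_le_mul_sum {ι : Type*} {s : Finset ι} {T : ι → ℝ} {N c : ℝ}
    (hN : 0 < N) (hc : 0 < c) (hs : #s ≤ N) (hT : ∀ h ∈ s, T h ≤ N)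
    (hsum : N ^ 2 ≤ c * ∑ h ∈ s, T h) : N ≤ 2 * c * #{h ∈ s | N ≤ 2 * c * T h} := by
  set G := {h ∈ s | N ≤ 2 * c * T h}
  have hpoint : ∀ h ∈ s, T h ≤ N / (2 * c) + if N ≤ 2 * c * T h then N else 0 := by
    intro h hh
    split_ifs with hlarge
    · exact (hT h hh).trans (le_add_of_nonneg_left (by positivity))
    · rw [add_zero, le_div_iff₀ (by positivity), mul_comm]
      exact (not_le.1 hlarge).le
  have hle : ∑ h ∈ s, T h ≤ #s * (N / (2 * c)) + #G * N := by
    refine (sum_le_sum hpoint).trans_eq ?_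
    rw [sum_add_distrib, sum_const, nsmul_eq_mul, ← sum_filter, sum_const, nsmul_eq_mul]
  have hle' : N ^ 2 ≤ N ^ 2 / 2 + c * #G * N :=
    calc N ^ 2 ≤ c * (#s * (N / (2 * c)) + #G * N) := hsum.trans (by gcongr)
      _ ≤ c * (N * (N / (2 * c)) + #G * N) := by gcongr
      _ = N ^ 2 / 2 + c * #G * N := by field_simp
  nlinarith

lemma exists_common_denominator {γ : ℕ → ℝ} {Q : ℕ} {L : ℝ} {s : Finset ℕ} (hQ : 1 ≤ Q)
    (hs : ∀ h ∈ s, HasRatApprox (γ h) Q L) :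
    ∃ q : ℕ, 1 ≤ q ∧ q ≤ Q ∧ ∃ t ⊆ s, #s ≤ Q * #t ∧ ∀ h ∈ t, ∃ a : ℤ, |q * γ h - a| * L ≤ Q := by
  choose! q hq hqQ hqa using hs
  obtain ⟨r, hr, hcard⟩ := exists_le_card_fiber_of_nsmul_le_card_of_maps_to
    (s := s) (t := Icc 1 Q) (f := q) (b := (#s : ℝ) / Q)
    (fun h hh ↦ mem_Icc.2 ⟨hq h hh, hqQ h hh⟩) ⟨1, mem_Icc.2 ⟨le_rfl, hQ⟩⟩ (by
      rw [Nat.card_Icc, Nat.add_sub_cancel, nsmul_eq_mul]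
      exact (mul_div_cancel₀ _ (by positivity)).le)
  rw [mem_Icc] at hr
  rw [div_le_iff₀ (by positivity), mul_comm] at hcard
  refine ⟨r, hr.1, hr.2, s.filter (q · = r), filter_subset _ _, by exact_mod_cast hcard, ?_⟩
  intro h hh
  obtain ⟨hhs, rfl⟩ := mem_filter.1 hh
  exact hqa h hhs

end Pigeonhole

section Vinogradov

lemma exists_card_le_mul_card_filter_Ico {s : Finset ℕ} {N W : ℕ} (hW : 0 < W)
    (hs : s ⊆ range N) :
    ∃ b : ℕ, #s ≤ (N / W + 1) * #{h ∈ s | h ∈ Ico b (b + W)} := by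
  obtain ⟨i, -, hi⟩ := exists_le_card_fiber_of_nsmul_le_card_of_maps_to
    (s := s) (t := range (N / W + 1)) (f := (· / W)) (b := (#s : ℝ) / (N / W + 1 : ℕ))
    (fun h hh ↦ mem_range_succ_iff.2 (Nat.div_le_div_right (mem_range.1 (hs hh)).le))
    ⟨0, by simp⟩ (by
      rw [card_range, nsmul_eq_mul]
      exact (mul_div_cancel₀ _ (by positivity)).le)
  rw [div_le_iff₀ (by positivity), mul_comm] at hi
  refine ⟨i * W, (Nat.cast_le.1 (by exact_mod_cast hi)).trans (Nat.mul_le_mul_left _ ?_)⟩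
  refine card_le_card fun h hh ↦ ?_
  obtain ⟨hhs, rfl⟩ := mem_filter.1 hh
  exact mem_filter.2 ⟨hhs, mem_Ico.2 ⟨Nat.div_mul_le_self h W, Nat.lt_div_mul_add hW⟩⟩

lemma exists_lt_and_lt_add_of_subset_Ico {s : Finset ℕ} {b W L : ℕ} (hL : 0 < L)
    (hs : s ⊆ Ico b (b + W)) (hcard : W / L + 1 < #s) :
    ∃ x ∈ s, ∃ y ∈ s, x < y ∧ y < x + L := by
  obtain ⟨x, hx, y, hy, hne, heq⟩ := exists_ne_map_eq_of_card_lt_of_maps_to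
    (s := s) (t := range (W / L + 1)) (f := fun h ↦ (h - b) / L) (by rwa [card_range])
    (fun h hh ↦ by
      have := mem_Ico.1 (hs hh)
      exact mem_range_succ_iff.2 (Nat.div_le_div_right (by omega)))
  wlog hlt : x < y generalizing x y
  · exact this y hy x hx hne.symm heq.symm (by omega)
  have hxb := mem_Ico.1 (hs hx)
  have hyb := mem_Ico.1 (hs hy)
  have hlow := Nat.div_mul_le_self (x - b) L
  have hup := Nat.lt_div_mul_add (a := y - b) hL
  rw [← heq] at hup
  exact ⟨x, hx, y, hy, hlt, by omega⟩

lemma exists_card_le_sub_of_one_lt_card {s : Finset ℕ} (hs : 1 < #s) :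
    ∃ m ∈ s, ∃ M ∈ s, m < M ∧ #s ≤ M - m + 1 := by
  have hne : s.Nonempty := card_pos.1 (by omega)
  have hcard : #s ≤ s.max' hne + 1 - s.min' hne := by
    rw [← Nat.card_Icc]
    exact card_le_card fun h hh ↦ mem_Icc.2 ⟨min'_le _ _ hh, le_max' _ _ hh⟩
  exact ⟨_, min'_mem s hne, _, max'_mem s hne, by omega, by omega⟩

/-- Two good approximations to `γ` with small denominators `q` and `D` are the same fraction, so
the accuracy of the one with the larger denominator is inherited by the other. -/
lemma mul_abs_sub_le_of_abs_sub_le {γ c T : ℝ} {q D : ℕ} {p n : ℤ} (hT : 0 < T)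
    (hp : |q * γ - p| * T ≤ c) (hn : |D * γ - n| * T ≤ c) (hcT : (q + D) * c < T) :
    D * (|q * γ - p| * T) ≤ q * c := by
  have hdet : ((D * p - q * n : ℤ) : ℝ) = q * (D * γ - n) - D * (q * γ - p) := by
    push_cast
    ring
  have hlt : |((D * p - q * n : ℤ) : ℝ)| * T < T := by
    have habs := abs_sub (q * (D * γ - n)) (D * (q * γ - p))
    rw [abs_mul, abs_mul, Nat.abs_cast, Nat.abs_cast] at habs
    calc |((D * p - q * n : ℤ) : ℝ)| * T
        ≤ (q * |D * γ - n| + D * |q * γ - p|) * T := by rw [hdet]; gcongr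
      _ = q * (|D * γ - n| * T) + D * (|q * γ - p| * T) := by ring
      _ ≤ q * c + D * c := by gcongr
      _ < T := by rwa [← add_mul]
  have hzero : D * p - q * n = 0 := by
    rw [← Int.abs_lt_one_iff, ← Int.cast_lt (R := ℝ), Int.cast_abs, Int.cast_one]
    exact (mul_lt_iff_lt_one_left hT).1 hlt
  have heq : D * |q * γ - p| = q * |D * γ - n| := by
    rw [← Nat.abs_cast D, ← Nat.abs_cast q, ← abs_mul, ← abs_mul, Nat.abs_cast, Nat.abs_cast]
    rw [hzero, Int.cast_zero] at hdet
    congr 1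
    linarith
  rw [← mul_assoc, heq, mul_assoc]
  gcongr

/-- Two elements of `s` close together supply the denominator, two far apart the accuracy. -/
lemma exists_abs_mul_sub_le_of_subset_Ico {s : Finset ℕ} {b W L : ℕ} {γ c T : ℝ} (hL : 0 < L)
    (hc : 0 ≤ c) (hs : s ⊆ Ico b (b + W)) (hcard : W / L + 1 < #s) (hT : 4 * W * c < T)
    (hγ : ∀ h ∈ s, ∃ n : ℤ, |γ * h - n| * T ≤ c) :
    ∃ q : ℕ, 1 ≤ q ∧ q ≤ L ∧ ∃ a : ℤ, |q * γ - a| * ((#s - 1) * T) ≤ 2 * L * c := by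
  have hdiff : ∀ x ∈ s, ∀ y ∈ s, x < y → y - x ≤ W ∧
      ∃ n : ℤ, |((y - x : ℕ) : ℝ) * γ - n| * T ≤ 2 * c := by
    intro x hx y hy hxy
    have hxb := mem_Ico.1 (hs hx)
    have hyb := mem_Ico.1 (hs hy)
    obtain ⟨nx, hnx⟩ := hγ x hx
    obtain ⟨ny, hny⟩ := hγ y hy
    refine ⟨by omega, ny - nx, ?_⟩
    have hsub : ((y - x : ℕ) : ℝ) * γ - (ny - nx : ℤ) = (γ * y - ny) - (γ * x - nx) := by
      push_cast [hxy.le]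
      ring
    have habs := abs_sub (γ * y - ny) (γ * x - nx)
    have hT0 : 0 < T := lt_of_le_of_lt (by positivity) hT
    rw [hsub]
    nlinarith
  obtain ⟨x, hx, y, hy, hxy, hyx⟩ := exists_lt_and_lt_add_of_subset_Ico hL hs hcard
  obtain ⟨m, hm, M, hM, hmM, hcardM⟩ :=
    exists_card_le_sub_of_one_lt_card ((Nat.le_add_left 1 _).trans_lt hcard)
  obtain ⟨hqW, p, hp⟩ := hdiff x hx y hy hxy
  obtain ⟨hDW, n, hn⟩ := hdiff m hm M hM hmM
  refine ⟨y - x, by omega, by omega, p, ?_⟩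
  have hW : ((y - x : ℕ) : ℝ) + (M - m : ℕ) ≤ 2 * W := by exact_mod_cast (by omega)
  have hD : (#s : ℝ) - 1 ≤ (M - m : ℕ) := by
    rw [sub_le_iff_le_add]
    exact_mod_cast hcardM
  have hqL : ((y - x : ℕ) : ℝ) ≤ L := by exact_mod_cast (by omega)
  have hT0 : 0 < T := lt_of_le_of_lt (by positivity) hT
  have hdet := mul_abs_sub_le_of_abs_sub_le hT0 hp hn (by nlinarith)
  calc |((y - x : ℕ) : ℝ) * γ - p| * ((#s - 1) * T)
      ≤ |((y - x : ℕ) : ℝ) * γ - p| * ((M - m : ℕ) * T) := by gcongr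
    _ = (M - m : ℕ) * (|((y - x : ℕ) : ℝ) * γ - p| * T) := by ring
    _ ≤ (y - x : ℕ) * (2 * c) := hdet
    _ ≤ L * (2 * c) := by gcongr
    _ = 2 * L * c := by ring

lemma exists_le_mul_card_filter_Ico {K N : ℕ} {s : Finset ℕ} (hK : 0 < K) (hN : 40 * K ^ 2 ≤ N)
    (hs : s ⊆ range N) (hcard : N ≤ K * #s) :
    ∃ b W : ℕ, 8 * K * W ≤ N ∧ N ≤ 17 * K ^ 2 * #{h ∈ s | h ∈ Ico b (b + W)} := by
  set W := N / (8 * K)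
  have hNW : N < 8 * K * (W + 1) := Nat.lt_mul_div_succ N (by omega)
  have hWpos : 0 < W := Nat.div_pos (by nlinarith) (by omega)
  obtain ⟨b, hb⟩ := exists_card_le_mul_card_filter_Ico hWpos hs
  refine ⟨b, W, Nat.mul_div_le _ _, ?_⟩
  set t := {h ∈ s | h ∈ Ico b (b + W)}
  have hdiv : N / W ≤ 16 * K := by
    refine Nat.le_of_lt_succ ((Nat.div_lt_iff_lt_mul hWpos).2 ?_)
    nlinarith
  calc N ≤ K * ((N / W + 1) * #t) := hcard.trans (by gcongr)
    _ ≤ K * ((17 * K) * #t) := by gcongr; omega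
    _ = 17 * K ^ 2 * #t := by ring

/-- Vinogradov's lemma. -/
lemma HasRatApprox.of_card_le {K N : ℕ} {T γ : ℝ} {s : Finset ℕ} (hK : 2 ≤ K)
    (hN : 40 * K ^ 2 ≤ N) (hT : N ≤ T) (hs : s ⊆ range N) (hcard : N ≤ K * #s)
    (hγ : ∀ h ∈ s, ∃ n : ℤ, |γ * h - n| * T ≤ K) : HasRatApprox γ (K ^ 15) (N * T) := by
  obtain ⟨b, W, hWN, hNt⟩ := exists_le_mul_card_filter_Ico (by omega) hN hs hcard
  set t := {h ∈ s | h ∈ Ico b (b + W)}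
  have ht : 3 ≤ #t := by
    by_contra! hlt
    nlinarith
  have hgap : W / (17 * K) + 1 < #t := by
    have hdiv : 17 * K * (W / (17 * K)) ≤ W := Nat.mul_div_le _ _
    nlinarith
  have hWT : 4 * W * (K : ℝ) < T := by
    refine lt_of_lt_of_le ?_ hT
    exact_mod_cast (by nlinarith : 4 * W * K < N)
  obtain ⟨q, hq, hqK, a, ha⟩ := exists_abs_mul_sub_le_of_subset_Ico (L := 17 * K) (by omega)
    (Nat.cast_nonneg K) (fun h hh ↦ (mem_filter.1 hh).2) hgap hWT
    fun h hh ↦ hγ h (mem_filter.1 hh).1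
  have hK5 : 17 * K ≤ K ^ 15 := by
    calc 17 * K ≤ 2 ^ 14 * K := by omega
      _ ≤ K ^ 14 * K := by gcongr
      _ = K ^ 15 := by ring
  refine ⟨q, hq, hqK.trans hK5, a, ?_⟩
  have hNt' : (N : ℝ) ≤ 34 * K ^ 2 * (#t - 1) := by
    have hN' : (N : ℝ) ≤ 17 * K ^ 2 * #t := by exact_mod_cast hNt
    have ht' : (3 : ℝ) ≤ #t := by exact_mod_cast ht
    nlinarith [sq_nonneg (K : ℝ)]
  have hT0 : 0 ≤ T := (Nat.cast_nonneg N).trans hT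
  calc |q * γ - a| * (N * T) ≤ |q * γ - a| * (34 * K ^ 2 * (#t - 1) * T) := by gcongr
    _ = 34 * K ^ 2 * (|q * γ - a| * ((#t - 1) * T)) := by ring
    _ ≤ 34 * K ^ 2 * (2 * (17 * K : ℕ) * K) := by gcongr
    _ = 1156 * K ^ 4 := by push_cast; ring
    _ ≤ 2 ^ 11 * K ^ 4 := by gcongr; norm_num
    _ ≤ K ^ 11 * K ^ 4 := by gcongr; exact_mod_cast hK
    _ = (K ^ 15 : ℕ) := by push_cast; ring

end Vinogradov

section LeadingCoefficient

open Polynomial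
open scoped FourierTransform

lemma hasRatApprox_coeff_one_of_natDegree_le_one {K N M : ℕ} {f : ℝ[X]} (hK : 2 ≤ K)
    (hf : f.natDegree ≤ 1) (hN : N ≤ K * ‖weylSum f M‖) : HasRatApprox (f.coeff 1) K N := by
  have hgeom : weylSum f M = 𝐞 (f.coeff 0) * ∑ y ∈ range M, (𝐞 (f.coeff 1) : ℂ) ^ y := by
    rw [weylSum, mul_sum]
    refine sum_congr rfl fun y _ ↦ ?_
    rw [eval_eq_sum_range' (Nat.lt_succ_of_le hf), sum_range_succ, sum_range_one, pow_zero, pow_one,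
      mul_one, fourierChar_add, mul_comm (f.coeff 1), fourierChar_natCast_mul]
  have hbound : ‖(𝐞 (f.coeff 1) : ℂ) - 1‖ * ‖weylSum f M‖ ≤ 2 := by
    rw [hgeom, norm_mul, Circle.norm_coe, one_mul, ← norm_mul, mul_geom_sum]
    refine (norm_sub_le _ _).trans ?_
    rw [norm_pow, Circle.norm_coe, one_pow, norm_one]
    norm_num
  refine ⟨1, le_rfl, by omega, round (f.coeff 1), ?_⟩
  rw [Nat.cast_one, one_mul]
  have hround := le_norm_fourierChar_sub_one (f.coeff 1)
  have hchain : 4 * (|f.coeff 1 - round (f.coeff 1)| * N) ≤ K * 2 :=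
    calc 4 * (|f.coeff 1 - round (f.coeff 1)| * N)
        = 4 * |f.coeff 1 - round (f.coeff 1)| * N := by ring
      _ ≤ ‖(𝐞 (f.coeff 1) : ℂ) - 1‖ * (K * ‖weylSum f M‖) := by gcongr
      _ = K * (‖(𝐞 (f.coeff 1) : ℂ) - 1‖ * ‖weylSum f M‖) := by ring
      _ ≤ K * 2 := by gcongr
  linarith [(Nat.cast_nonneg K : (0 : ℝ) ≤ K)]

lemma le_mul_card_filter_le_norm_weylSum {K N M : ℕ} {f : ℝ[X]} (hK : 0 < K) (hN : 0 < N)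
    (hMN : M ≤ N) (hf : N ≤ K * ‖weylSum f M‖) :
    N ≤ 4 * K ^ 2 * #{h ∈ range M | (N : ℝ) ≤
      (4 * K ^ 2 : ℕ) * ‖weylSum (taylor ((h : ℕ) : ℝ) f - f) (M - h)‖} := by
  have hsq : (N : ℝ) ^ 2 ≤
      2 * K ^ 2 * ∑ h ∈ range M, ‖weylSum (taylor (h : ℝ) f - f) (M - h)‖ :=
    calc (N : ℝ) ^ 2 ≤ (K * ‖weylSum f M‖) ^ 2 := by gcongr
      _ = K ^ 2 * ‖weylSum f M‖ ^ 2 := by ring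
      _ ≤ K ^ 2 * (2 * ∑ h ∈ range M, ‖weylSum (taylor (h : ℝ) f - f) (M - h)‖) := by
        gcongr
        exact norm_weylSum_sq_le f M
      _ = _ := by ring
  have hcard := le_mul_card_filter_of_sq_le_mul_sum (by positivity) (by positivity)
    (by rw [card_range]; exact_mod_cast hMN)
    (fun h _ ↦ (norm_weylSum_le _ _).trans (by exact_mod_cast (Nat.sub_le M h).trans hMN)) hsq
  rw [show 2 * (2 * (K : ℝ) ^ 2) = (4 * K ^ 2 : ℕ) by push_cast; ring] at hcard
  exact_mod_cast hcard

lemma HasRatApprox.of_card_hasRatApprox {K N : ℕ} {T γ : ℝ} {s : Finset ℕ} (hK : 2 ≤ K)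
    (hN : 40 * K ^ 4 ≤ N) (hT : N ≤ T) (hs : s ⊆ range N) (hcard : N ≤ K * #s)
    (hγ : ∀ h ∈ s, HasRatApprox (h * γ) K T) : HasRatApprox γ (K ^ 31) (N * T) := by
  obtain ⟨q, hq, hqK, t, hts, hst, ht⟩ := exists_common_denominator (by omega) hγ
  have hK2 : K ≤ K ^ 2 := Nat.le_self_pow two_ne_zero K
  have hqγ : HasRatApprox (q * γ) ((K ^ 2) ^ 15) (N * T) := by
    refine HasRatApprox.of_card_le (s := t) (hK.trans hK2) (by linarith) hT (hts.trans hs) ?_ ?_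
    · calc N ≤ K * (K * #t) := hcard.trans (by gcongr)
        _ = K ^ 2 * #t := by ring
    · intro h hh
      obtain ⟨a, ha⟩ := ht h hh
      refine ⟨a, le_trans (le_of_eq ?_) (ha.trans (by exact_mod_cast hK2))⟩
      rw [mul_right_comm, mul_assoc]
  have hγ' := HasRatApprox.of_intCast_mul (h := q) (by omega) (by exact_mod_cast hqγ)
  refine hγ'.mono ?_
  rw [Int.natAbs_natCast]
  calc q * (K ^ 2) ^ 15 ≤ K * (K ^ 2) ^ 15 := by gcongr
    _ = K ^ 31 := by ring

lemma hasRatApprox_coeff_of_taylor_sub {k J K N M : ℕ} {f : ℝ[X]} (hK : 2 ≤ K)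
    (hJ : 4 * K ^ 2 ≤ J) (hJN : 40 * J ^ 4 ≤ N) (hMN : M ≤ N) (hf : f.natDegree ≤ k + 2)
    (hN : N ≤ K * ‖weylSum f M‖)
    (hdiff : ∀ h : ℕ, (N : ℝ) ≤ (4 * K ^ 2 : ℕ) * ‖weylSum (taylor (h : ℝ) f - f) (M - h)‖ →
      HasRatApprox ((taylor (h : ℝ) f - f).coeff (k + 1)) J ((N : ℝ) ^ (k + 1))) :
    HasRatApprox (f.coeff (k + 2)) ((k + 2) * J ^ 31) ((N : ℝ) ^ (k + 2)) := by
  have hJ2 : 2 ≤ J := by nlinarith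
  have hN0 : 0 < N := lt_of_lt_of_le (by positivity) hJN
  have hcard := le_mul_card_filter_le_norm_weylSum (by omega) hN0 hMN hN
  set s := {h ∈ range M | (N : ℝ) ≤
    (4 * K ^ 2 : ℕ) * ‖weylSum (taylor ((h : ℕ) : ℝ) f - f) (M - h)‖}
  have hlead : HasRatApprox (((k + 2 : ℕ) : ℤ) * f.coeff (k + 2)) (J ^ 31)
      (N * (N : ℝ) ^ (k + 1)) := by
    refine HasRatApprox.of_card_hasRatApprox hJ2 hJN
      (le_self_pow₀ (by exact_mod_cast hN0) k.succ_ne_zero)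
      ((filter_subset _ _).trans (range_subset_range.2 hMN)) (hcard.trans (by gcongr)) ?_
    intro h hh
    have happrox := hdiff h (mem_filter.1 hh).2
    rw [coeff_taylor_sub_self hf] at happrox
    convert happrox using 1
    push_cast
    ring
  rw [← pow_succ'] at hlead
  exact HasRatApprox.of_intCast_mul (by omega) hlead

lemma HasRatApprox.of_lt_mul_pow {J N : ℕ} (β : ℝ) (hJ : 2 ≤ J) (hN : N < 40 * J ^ 4) (k : ℕ) :
    HasRatApprox β (J ^ (10 * k)) ((N : ℝ) ^ k) := by
  have hNJ : N ≤ J ^ 10 :=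
    calc N ≤ 2 ^ 6 * J ^ 4 := by omega
      _ ≤ J ^ 6 * J ^ 4 := by gcongr
      _ = J ^ 10 := by ring
  refine HasRatApprox.of_le _ (Nat.one_le_pow _ _ (by omega)) ?_
  exact_mod_cast calc N ^ k ≤ (J ^ 10) ^ k := by gcongr
    _ = J ^ (10 * k) := by rw [pow_mul]

lemma exists_hasRatApprox_coeff_natDegree (k : ℕ) : ∃ C : ℕ, ∀ (K N M : ℕ) (f : ℝ[X]),
    2 ≤ K → M ≤ N → f.natDegree ≤ k + 1 → N ≤ K * ‖weylSum f M‖ →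
    HasRatApprox (f.coeff (k + 1)) (K ^ C) ((N : ℝ) ^ (k + 1)) := by
  induction k with
  | zero =>
    refine ⟨1, fun K N M f hK _ hf hN ↦ ?_⟩
    rw [zero_add, pow_one, pow_one]
    exact hasRatApprox_coeff_one_of_natDegree_le_one hK hf hN
  | succ k ih =>
    obtain ⟨C, ih⟩ := ih
    refine ⟨4 * (C + 1) * (10 * k + 40), fun K N M f hK hMN hf hN ↦ ?_⟩
    set J := (4 * K ^ 2) ^ (C + 1)
    have hK₁ : 2 ≤ 4 * K ^ 2 := by nlinarith
    have hK₁J : 4 * K ^ 2 ≤ J := Nat.le_self_pow C.succ_ne_zero _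
    have hJ2 : 2 ≤ J := hK₁.trans hK₁J
    have hJK : J ≤ K ^ (4 * (C + 1)) := by
      rw [pow_mul]
      refine Nat.pow_le_pow_left ?_ _
      calc 4 * K ^ 2 = 2 ^ 2 * K ^ 2 := by ring
        _ ≤ K ^ 2 * K ^ 2 := by gcongr
        _ = K ^ 4 := by ring
    rw [pow_mul]
    refine HasRatApprox.mono ?_ (Nat.pow_le_pow_left hJK _)
    rcases lt_or_ge N (40 * J ^ 4) with hsmall | hlarge
    · exact (HasRatApprox.of_lt_mul_pow _ hJ2 hsmall (k + 2)).mono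
        (Nat.pow_le_pow_right (two_pos.trans_le hJ2) (by omega))
    · refine (hasRatApprox_coeff_of_taylor_sub hK hK₁J hlarge hMN hf hN fun h hh ↦ ?_).mono ?_
      · exact (ih _ N (M - h) _ hK₁ (by omega) (natDegree_taylor_sub_self_le hf _) hh).mono
          (Nat.pow_le_pow_right (two_pos.trans_le hK₁) C.le_succ)
      · calc (k + 2) * J ^ 31 ≤ J ^ (k + 2) * J ^ 31 := by
              gcongr
              exact (Nat.lt_pow_self hJ2).le
          _ ≤ J ^ (10 * k + 40) := by
            rw [← pow_add]
            exact Nat.pow_le_pow_right (two_pos.trans_le hJ2) (by omega)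

end LeadingCoefficient

section Twists

variable {R E : Type*} [NormedRing R] [SeminormedAddCommGroup E] [Module R E] [IsBoundedSMul R E]

lemma norm_sum_range_smul_le (w : ℕ → R) (u : ℕ → E) {M : ℕ} {B : ℝ}
    (hB : ∀ m ≤ M, ‖∑ y ∈ range m, u y‖ ≤ B) :
    ‖∑ y ∈ range M, w y • u y‖ ≤ (‖w M‖ + ∑ y ∈ range M, ‖w (y + 1) - w y‖) * B := by
  have habel : ∀ m, ∑ y ∈ range m, w y • u y = w m • ∑ y ∈ range m, u y -
      ∑ x ∈ range m, (w (x + 1) - w x) • ∑ y ∈ range (x + 1), u y := by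
    intro m
    induction m with
    | zero => simp
    | succ m ih =>
      simp only [sum_range_succ, smul_add, sub_smul] at ih ⊢
      rw [ih]
      abel
  rw [habel, add_mul, sum_mul]
  refine (norm_sub_le _ _).trans (add_le_add ?_ ((norm_sum_le _ _).trans (sum_le_sum ?_)))
  · exact (norm_smul_le _ _).trans (by gcongr; exact hB M le_rfl)
  · intro x hx
    exact (norm_smul_le _ _).trans (by gcongr; exact hB _ (mem_range.1 hx))

open ZMod in
lemma exists_norm_sum_mul_le {ι : Type*} {q : ℕ} [NeZero q] {Φ : ZMod q → ℂ} (hΦ : ∀ j, ‖Φ j‖ ≤ 1)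
    (s : Finset ι) (x : ι → ZMod q) (u : ι → ℂ) :
    ∃ k : ZMod q, ‖∑ i ∈ s, Φ (x i) * u i‖ ≤ q * ‖∑ i ∈ s, stdAddChar (k * x i) * u i‖ := by
  have hdft : ∀ k, ‖𝓕 Φ k‖ ≤ q := by
    intro k
    refine (norm_sum_le_of_le (n := fun _ ↦ 1) _ fun j _ ↦ ?_).trans (by simp)
    rw [smul_eq_mul, norm_mul, AddChar.norm_apply, one_mul]
    exact hΦ j
  have hinv : ∀ j, Φ j = (q : ℂ)⁻¹ * ∑ k, stdAddChar (k * j) * 𝓕 Φ k := by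
    intro j
    simpa only [smul_eq_mul] using
      (congrFun (LinearEquiv.symm_apply_apply 𝓕 Φ) j).symm.trans (invDFT_apply (𝓕 Φ) j)
  obtain ⟨k, -, hk⟩ := exists_max_image univ
    (fun k ↦ ‖∑ i ∈ s, stdAddChar (k * x i) * u i‖) univ_nonempty
  refine ⟨k, ?_⟩
  have hswap : ∑ i ∈ s, Φ (x i) * u i =
      (q : ℂ)⁻¹ * ∑ l, 𝓕 Φ l * ∑ i ∈ s, stdAddChar (l * x i) * u i := by
    simp only [mul_sum]
    rw [sum_comm]
    refine sum_congr rfl fun i _ ↦ ?_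
    rw [hinv, mul_sum, sum_mul]
    exact sum_congr rfl fun l _ ↦ by ring
  have hq : (q : ℝ) ≠ 0 := NeZero.ne _
  rw [hswap, norm_mul, norm_inv, Complex.norm_natCast, inv_mul_le_iff₀ (by positivity)]
  calc ‖∑ l, 𝓕 Φ l * ∑ i ∈ s, stdAddChar (l * x i) * u i‖
      ≤ ∑ _l : ZMod q, q * ‖∑ i ∈ s, stdAddChar (k * x i) * u i‖ := by
        refine norm_sum_le_of_le _ fun l _ ↦ (norm_mul_le _ _).trans ?_
        gcongr
        · exact hdft l
        · exact hk l (mem_univ l)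
    _ = q * (q * ‖∑ i ∈ s, stdAddChar (k * x i) * u i‖) := by simp

end Twists

section LinearCoefficient

open Polynomial
open scoped FourierTransform

lemma weylSum_add (f g : ℝ[X]) (M : ℕ) :
    weylSum (f + g) M = ∑ y ∈ range M, (𝐞 (g.eval (y : ℝ)) : ℂ) * 𝐞 (f.eval (y : ℝ)) :=
  sum_congr rfl fun y _ ↦ by rw [eval_add, add_comm, fourierChar_add]

lemma stdAddChar_intCast_eq_fourierChar {q : ℕ} [NeZero q] (a : ℤ) :
    ZMod.stdAddChar (a : ZMod q) = (𝐞 (a / q : ℝ) : ℂ) := by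
  rw [ZMod.stdAddChar_coe, Real.fourierChar_apply]
  push_cast
  ring_nf

lemma exists_norm_weylSum_add_monomial_le (g : ℝ[X]) (m M : ℕ) (θ : ℝ) :
    ∃ M' ≤ M, ‖weylSum (g + monomial m θ) M‖ ≤ (1 + 2 * π * |θ| * M ^ m) * ‖weylSum g M'‖ := by
  obtain ⟨M', hM', hmax⟩ := exists_max_image (range (M + 1)) (fun x ↦ ‖weylSum g x‖) ⟨0, by simp⟩
  refine ⟨M', mem_range_succ_iff.1 hM', ?_⟩
  have hvar : ∀ y : ℕ, ‖(𝐞 ((monomial m θ).eval ((y + 1 : ℕ) : ℝ)) : ℂ) -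
      𝐞 ((monomial m θ).eval (y : ℝ))‖ ≤
        2 * π * |θ| * (((y + 1 : ℕ) : ℝ) ^ m - (y : ℝ) ^ m) := by
    intro y
    have hmono : (0 : ℝ) ≤ ((y + 1 : ℕ) : ℝ) ^ m - (y : ℝ) ^ m := by
      rw [sub_nonneg]
      gcongr
      exact y.le_succ
    have hsucc : (monomial m θ).eval ((y + 1 : ℕ) : ℝ) =
        θ * (((y + 1 : ℕ) : ℝ) ^ m - (y : ℝ) ^ m) + (monomial m θ).eval (y : ℝ) := by
      rw [eval_monomial, eval_monomial]
      ring
    rw [hsucc, fourierChar_add, ← sub_one_mul, norm_mul, Circle.norm_coe, mul_one]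
    refine (norm_fourierChar_sub_one_le _).trans_eq ?_
    rw [abs_mul, abs_of_nonneg hmono, mul_assoc _ |θ|]
  rw [weylSum_add]
  refine (norm_sum_range_smul_le (fun y : ℕ ↦ (𝐞 ((monomial m θ).eval (y : ℝ)) : ℂ)) _
    fun x hx ↦ hmax x (mem_range_succ_iff.2 hx)).trans ?_
  gcongr
  · rw [Circle.norm_coe]
  · refine (sum_le_sum fun y _ ↦ hvar y).trans ?_
    rw [← mul_sum, sum_range_sub fun y : ℕ ↦ (y : ℝ) ^ m]
    gcongr
    exact sub_le_self _ (by positivity)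

lemma exists_norm_weylSum_add_monomial_div_le (g : ℝ[X]) (m M : ℕ) (a : ℤ) {q : ℕ} (hq : 1 ≤ q) :
    ∃ s : ℤ, ‖weylSum (g + monomial m (a / q : ℝ)) M‖ ≤
      q * ‖weylSum (g + monomial 1 (s / q : ℝ)) M‖ := by
  have : NeZero q := ⟨by omega⟩
  obtain ⟨k, hk⟩ := exists_norm_sum_mul_le (q := q)
    (Φ := fun j ↦ ZMod.stdAddChar ((a : ZMod q) * j ^ m)) (fun j ↦ (AddChar.norm_apply _ _).le)
    (range M) (fun y ↦ (y : ZMod q)) (fun y ↦ 𝐞 (g.eval (y : ℝ)))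
  refine ⟨k.val, ?_⟩
  have htwist : ∀ (n : ℕ) (b : ℤ) (y : ℕ), ZMod.stdAddChar ((b : ZMod q) * (y : ZMod q) ^ n) =
      (𝐞 ((monomial n (b / q : ℝ)).eval (y : ℝ)) : ℂ) := by
    intro n b y
    rw [eval_monomial, div_mul_eq_mul_div]
    exact_mod_cast stdAddChar_intCast_eq_fourierChar (q := q) (b * y ^ n)
  rw [weylSum_add, weylSum_add]
  simp only [htwist] at hk
  convert hk using 4 with y
  rw [← htwist, pow_one, Int.cast_natCast, ZMod.natCast_zmod_val]

/-- The leading monomial is `(a/q) yᵏ⁺²` up to a perturbation of bounded total variation, and the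
former has period `q` modulo `1`. Expanding it into additive characters of `ℤ/q` replaces it by a
linear phase `(s/q) y`, which lowers the degree and shifts the linear coefficient by `s/q` only. -/
lemma exists_le_mul_norm_weylSum_sub_monomial_add_monomial {K N M k C : ℕ} {f : ℝ[X]} (hK : 2 ≤ K)
    (hMN : M ≤ N) (hN : N ≤ K * ‖weylSum f M‖)
    (hβ : HasRatApprox (f.coeff (k + 2)) (K ^ C) ((N : ℝ) ^ (k + 2))) :
    ∃ q : ℕ, 1 ≤ q ∧ q ≤ K ^ C ∧ ∃ s : ℤ, ∃ M' ≤ N, (N : ℝ) ≤ (K ^ (2 * C + 4) : ℕ) *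
      ‖weylSum (f - monomial (k + 2) (f.coeff (k + 2)) + monomial 1 (s / q : ℝ)) M'‖ := by
  obtain ⟨q, hq, hqK, a, ha⟩ := hβ.exists_abs_sub_div_mul_le (by positivity)
  set β := f.coeff (k + 2)
  set g := f - monomial (k + 2) β with hg
  have hqKr : (q : ℝ) ≤ (K : ℝ) ^ C := by exact_mod_cast hqK
  have hθ : |β - a / q| * (M : ℝ) ^ (k + 2) ≤ (K : ℝ) ^ C :=
    calc |β - a / q| * (M : ℝ) ^ (k + 2) ≤ |β - a / q| * (N : ℝ) ^ (k + 2) := by gcongr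
      _ ≤ (K : ℝ) ^ C := by exact_mod_cast ha
  have hf : f = g + monomial (k + 2) (a / q : ℝ) + monomial (k + 2) (β - a / q) := by
    rw [add_assoc, ← map_add, add_sub_cancel, hg, sub_add_cancel]
  obtain ⟨M', hM', htwist⟩ := exists_norm_weylSum_add_monomial_le
    (g + monomial (k + 2) (a / q : ℝ)) (k + 2) M (β - a / q)
  obtain ⟨s, hs⟩ := exists_norm_weylSum_add_monomial_div_le g (k + 2) M' a hq
  refine ⟨q, hq, hqK, s, M', hM'.trans hMN, ?_⟩
  have hKr : (2 : ℝ) ≤ K := by exact_mod_cast hK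
  have hvar : 1 + 2 * π * |β - a / q| * (M : ℝ) ^ (k + 2) ≤ (K : ℝ) ^ (C + 3) := by
    have hKC : (1 : ℝ) ≤ (K : ℝ) ^ C := one_le_pow₀ (by linarith)
    calc 1 + 2 * π * |β - a / q| * (M : ℝ) ^ (k + 2)
        = 1 + 2 * π * (|β - a / q| * (M : ℝ) ^ (k + 2)) := by ring
      _ ≤ (K : ℝ) ^ C + 7 * (K : ℝ) ^ C := by
          gcongr
          linarith [Real.pi_lt_d2]
      _ = (K : ℝ) ^ C * 2 ^ 3 := by ring
      _ ≤ (K : ℝ) ^ (C + 3) := by rw [pow_add]; gcongr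
  calc (N : ℝ) ≤ K * ‖weylSum f M‖ := hN
    _ ≤ K * ((K : ℝ) ^ (C + 3) * ((K : ℝ) ^ C * ‖weylSum (g + monomial 1 (s / q : ℝ)) M'‖)) := by
        gcongr
        nth_rw 1 [hf]
        refine htwist.trans ?_
        gcongr
        exact hs.trans (by gcongr)
    _ = _ := by push_cast; ring

lemma exists_hasRatApprox_coeff_one (k : ℕ) : ∃ C : ℕ, ∀ (K N M : ℕ) (f : ℝ[X]),
    2 ≤ K → M ≤ N → f.natDegree ≤ k + 1 → N ≤ K * ‖weylSum f M‖ →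
    HasRatApprox (f.coeff 1) (K ^ C) N := by
  induction k with
  | zero =>
    refine ⟨1, fun K N M f hK _ hf hN ↦ ?_⟩
    rw [pow_one]
    exact hasRatApprox_coeff_one_of_natDegree_le_one hK hf hN
  | succ k ih =>
    obtain ⟨C, ih⟩ := ih
    obtain ⟨C₁, hlead⟩ := exists_hasRatApprox_coeff_natDegree (k + 1)
    refine ⟨C₁ + (2 * C₁ + 4) * C, fun K N M f hK hMN hf hN ↦ ?_⟩
    obtain ⟨q, hq, hqK, s, M', hM', hN'⟩ :=
      exists_le_mul_norm_weylSum_sub_monomial_add_monomial hK hMN hN (hlead K N M f hK hMN hf hN)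
    have hdeg : (f - monomial (k + 2) (f.coeff (k + 2))).natDegree ≤ k + 1 := by
      rw [natDegree_le_iff_coeff_eq_zero]
      intro n hn
      rw [coeff_sub, coeff_monomial]
      split_ifs with h
      · rw [h, sub_self]
      · rw [sub_zero, coeff_eq_zero_of_natDegree_lt (by omega)]
    have happrox := ih (K ^ (2 * C₁ + 4)) N M' _ (hK.trans (Nat.le_self_pow (by omega) K)) hM'
      (natDegree_add_le_of_degree_le hdeg ((natDegree_monomial_le _).trans (by omega))) hN'
    rw [coeff_add, coeff_sub, coeff_monomial, coeff_monomial, if_neg (by omega), if_pos rfl,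
      sub_zero] at happrox
    rw [pow_add, pow_mul]
    exact happrox.of_add_div hq |>.mono (Nat.mul_le_mul_right _ hqK)

lemma exists_mul_norm_weylSum_lt {α : ℝ} (hα : ¬ IsLiouvilleReal α) (k : ℕ) :
    ∃ D : ℕ, ∀ (K N : ℕ) (f : ℝ[X]) (h : ℤ), 2 ≤ K → f.natDegree ≤ k + 1 → f.coeff 1 = α →
      h ≠ 0 → h.natAbs ≤ K → K ^ D < N → K * ‖weylSum (C (h : ℝ) * f) N‖ < N := by
  obtain ⟨C₀, hlin⟩ := exists_hasRatApprox_coeff_one k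
  obtain ⟨n, hn⟩ := HasRatApprox.le_of_not_isLiouvilleReal hα
  refine ⟨C₀ + 1 + (C₀ + 2) * n, fun K N f h hK hf hfα hh hhK hN ↦ ?_⟩
  by_contra! hlarge
  have happrox := hlin K N N _ hK le_rfl ((natDegree_C_mul_le _ _).trans hf) hlarge
  rw [coeff_C_mul, hfα] at happrox
  have hle := hn _ _ <| happrox.of_intCast_mul hh |>.mono (Q' := K ^ (C₀ + 1)) <| by
    rw [pow_succ']
    gcongr
  refine hN.not_ge ?_
  calc N ≤ K ^ (C₀ + 1) * (2 * K ^ (C₀ + 1)) ^ n := by exact_mod_cast hle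
    _ ≤ K ^ (C₀ + 1) * (K * K ^ (C₀ + 1)) ^ n := by gcongr
    _ = K ^ (C₀ + 1 + (C₀ + 2) * n) := by ring

end LinearCoefficient

section FractionalParts

open Polynomial
open scoped FourierTransform ComplexConjugate

/-- The number of `y < N` for which the fractional part of `u y` is less than `δ`. -/
noncomputable def fractCount (u : ℕ → ℝ) (δ : ℝ) (N : ℕ) : ℕ := #{y ∈ range N | Int.fract (u y) < δ}

lemma fractCount_le (u : ℕ → ℝ) (δ : ℝ) (N : ℕ) : fractCount u δ N ≤ N :=
  (card_filter_le _ _).trans_eq (card_range N)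

lemma fourierChar_natCast_mul_fract (h : ℕ) (t : ℝ) :
    (𝐞 (h * Int.fract t) : ℂ) = 𝐞 (h * t) := by
  conv_rhs => rw [← Int.fract_add_floor t, mul_add, ← Int.cast_natCast h, ← Int.cast_mul,
    fourierChar_add_intCast, Int.cast_natCast]

lemma half_le_norm_sum_range_fourierChar {K : ℕ} {t : ℝ} (ht : 16 * K * Int.fract t ≤ 1) :
    (K : ℝ) / 2 ≤ ‖∑ h ∈ range K, (𝐞 (h * t) : ℂ)‖ := by
  have hterm : ∀ h ∈ range K, ‖(𝐞 (h * t) : ℂ) - 1‖ ≤ 1 / 2 := by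
    intro h hh
    have hhK : (h : ℝ) ≤ K := by exact_mod_cast (mem_range.1 hh).le
    have hht : h * Int.fract t ≤ K * Int.fract t := by gcongr
    rw [← fourierChar_natCast_mul_fract]
    refine (norm_fourierChar_sub_one_le _).trans ?_
    rw [abs_of_nonneg (mul_nonneg h.cast_nonneg (Int.fract_nonneg t))]
    nlinarith [Real.pi_lt_d2, Real.pi_pos]
  have hdiff : ‖∑ h ∈ range K, (𝐞 (h * t) : ℂ) - K‖ ≤ K / 2 := by
    calc ‖∑ h ∈ range K, (𝐞 (h * t) : ℂ) - K‖ = ‖∑ h ∈ range K, ((𝐞 (h * t) : ℂ) - 1)‖ := by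
          rw [sum_sub_distrib, sum_const, card_range, nsmul_one]
      _ ≤ ∑ _h ∈ range K, (1 / 2 : ℝ) := norm_sum_le_of_le _ hterm
      _ = K / 2 := by rw [sum_const, card_range, nsmul_eq_mul, mul_one_div]
  have htri := norm_sub_norm_le (K : ℂ) (∑ h ∈ range K, (𝐞 (h * t) : ℂ))
  rw [Complex.norm_natCast, norm_sub_rev] at htri
  linarith

lemma norm_sum_range_fourierChar_sq_le (K : ℕ) (t : ℝ) :
    ‖∑ h ∈ range K, (𝐞 (h * t) : ℂ)‖ ^ 2 ≤
      2 * (∑ i ∈ range K, ∑ j ∈ range (i + 1), (𝐞 ((i - j : ℕ) * t) : ℂ)).re := by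
  have hexp := norm_sum_range_sq_add_sum_norm_sq (𝕜 := ℂ) (fun h : ℕ ↦ (𝐞 (h * t) : ℂ)) K
  refine (le_add_of_nonneg_right (sum_nonneg fun _ _ ↦ sq_nonneg _)).trans_eq (hexp.trans ?_)
  rw [RCLike.re_eq_complex_re]
  congr 2
  refine sum_congr rfl fun i _ ↦ sum_congr rfl fun j hj ↦ ?_
  have hji : j ≤ i := mem_range_succ_iff.1 hj
  rw [RCLike.inner_apply, ← Circle.coe_inv_eq_conj, ← AddChar.map_neg_eq_inv, ← Circle.coe_mul,
    ← AddChar.map_add_eq_mul, Nat.cast_sub hji]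
  ring_nf

variable {K N : ℕ} {u : ℕ → ℝ} {δ : ℝ}

lemma sum_norm_sum_range_fourierChar_sq_le
    (hu : ∀ h : ℕ, h ≠ 0 → h < K → K * ‖∑ y ∈ range N, (𝐞 (h * u y) : ℂ)‖ ≤ N) :
    ∑ y ∈ range N, ‖∑ h ∈ range K, (𝐞 (h * u y) : ℂ)‖ ^ 2 ≤ 4 * K * N := by
  have hswap : ∑ y ∈ range N, ∑ i ∈ range K, ∑ j ∈ range (i + 1), (𝐞 ((i - j : ℕ) * u y) : ℂ) =
      ∑ i ∈ range K, ∑ j ∈ range (i + 1), ∑ y ∈ range N, (𝐞 ((i - j : ℕ) * u y) : ℂ) := by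
    rw [sum_comm]
    exact sum_congr rfl fun i _ ↦ sum_comm
  have hinner : ∀ i ∈ range K,
      ‖∑ j ∈ range (i + 1), ∑ y ∈ range N, (𝐞 ((i - j : ℕ) * u y) : ℂ)‖ ≤ 2 * N := by
    intro i hi
    have hK : (0 : ℝ) < K := by exact_mod_cast i.zero_le.trans_lt (mem_range.1 hi)
    have hoff : ∀ j ∈ range i, ‖∑ y ∈ range N, (𝐞 ((i - j : ℕ) * u y) : ℂ)‖ ≤ N / K := by
      intro j hj
      rw [mem_range] at hi hj
      rw [le_div_iff₀' hK]
      exact hu (i - j) (by omega) (by omega)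
    rw [sum_range_succ, two_mul]
    refine norm_add_le_of_le ((norm_sum_le_of_le _ hoff).trans ?_) ?_
    · rw [sum_const, card_range, nsmul_eq_mul, mul_div_assoc', div_le_iff₀ hK, mul_comm]
      gcongr
      exact (mem_range.1 hi).le
    · refine (norm_sum_le_of_le _ fun y _ ↦ (Circle.norm_coe _).le).trans ?_
      simp
  calc ∑ y ∈ range N, ‖∑ h ∈ range K, (𝐞 (h * u y) : ℂ)‖ ^ 2
      ≤ 2 * (∑ i ∈ range K, ∑ j ∈ range (i + 1),
          ∑ y ∈ range N, (𝐞 ((i - j : ℕ) * u y) : ℂ)).re := by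
        refine (sum_le_sum fun y _ ↦ norm_sum_range_fourierChar_sq_le K (u y)).trans_eq ?_
        rw [← hswap, ← mul_sum, Complex.re_sum]
    _ ≤ 2 * ∑ _i ∈ range K, (2 * N : ℝ) := by
        gcongr
        exact (Complex.re_le_norm _).trans (norm_sum_le_of_le _ hinner)
    _ = 4 * K * N := by rw [sum_const, card_range, nsmul_eq_mul]; ring

lemma fractCount_mul_le (hδ : 16 * K * δ ≤ 1)
    (hu : ∀ h : ℕ, h ≠ 0 → h < K → K * ‖∑ y ∈ range N, (𝐞 (h * u y) : ℂ)‖ ≤ N) :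
    (fractCount u δ N : ℝ) * K ≤ 16 * N := by
  have hlow : ∀ y ∈ {y ∈ range N | Int.fract (u y) < δ},
      ((K : ℝ) / 2) ^ 2 ≤ ‖∑ h ∈ range K, (𝐞 (h * u y) : ℂ)‖ ^ 2 := by
    intro y hy
    gcongr
    refine half_le_norm_sum_range_fourierChar (le_trans ?_ hδ)
    gcongr
    exact (mem_filter.1 hy).2.le
  have hsq : (fractCount u δ N : ℝ) * ((K : ℝ) / 2) ^ 2 ≤ 4 * K * N := by
    rw [← nsmul_eq_mul]
    exact (card_nsmul_le_sum _ _ _ hlow).trans ((sum_le_sum_of_subset_of_nonneg (filter_subset _ _)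
      fun _ _ _ ↦ sq_nonneg _).trans (sum_norm_sum_range_fourierChar_sq_le hu))
  rcases K.eq_zero_or_pos with rfl | hK
  · simp
  · have hKr : (0 : ℝ) < K := by exact_mod_cast hK
    refine le_of_mul_le_mul_left ?_ hKr
    linarith

lemma fractCount_mul_le_of_forall_norm_sum_le {B : ℝ} (hB : 0 ≤ B) (hδ : 0 ≤ δ)
    (hBδ : 16 * B * δ ≤ 1)
    (hu : ∀ K : ℕ, 2 ≤ K → K ≤ B → ∀ h : ℕ, h ≠ 0 → h < K →
      K * ‖∑ y ∈ range N, (𝐞 (h * u y) : ℂ)‖ ≤ N) :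
    (fractCount u δ N : ℝ) * B ≤ 32 * N := by
  rcases lt_or_ge B 2 with hB2 | hB2
  · have hle : (fractCount u δ N : ℝ) ≤ N := by exact_mod_cast fractCount_le u δ N
    calc (fractCount u δ N : ℝ) * B ≤ N * 2 := by gcongr
      _ ≤ 32 * N := by linarith [N.cast_nonneg (α := ℝ)]
  · set K := ⌊B⌋₊
    have hK2 : 2 ≤ K := Nat.le_floor (by exact_mod_cast hB2)
    have hKB : (K : ℝ) ≤ B := Nat.floor_le hB
    have hBK : B ≤ 2 * K := by
      have hK1 : (1 : ℝ) ≤ K := by exact_mod_cast one_le_two.trans hK2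
      linarith [Nat.lt_floor_add_one B]
    have hKδ : 16 * K * δ ≤ 1 := le_trans (by gcongr) hBδ
    calc (fractCount u δ N : ℝ) * B ≤ fractCount u δ N * (2 * K) := by gcongr
      _ = 2 * (fractCount u δ N * K) := by ring
      _ ≤ 2 * (16 * N) := by
        gcongr 2 * ?_
        exact fractCount_mul_le hKδ (hu K hK2 hKB)
      _ = 32 * N := by ring

lemma fractCount_le_of_forall_norm_sum_le {B : ℝ} (hδ : 0 < δ) (hB : 0 < B)
    (hu : ∀ K : ℕ, 2 ≤ K → K ≤ B → ∀ h : ℕ, h ≠ 0 → h < K →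
      K * ‖∑ y ∈ range N, (𝐞 (h * u y) : ℂ)‖ ≤ N) :
    (fractCount u δ N : ℝ) ≤ 512 * (δ * N + N / B) := by
  set m : ℝ := min (1 / (16 * δ)) B
  have hm : 0 < m := by positivity
  have hcount : (fractCount u δ N : ℝ) * m ≤ 32 * N := by
    have hmδ : 16 * m * δ ≤ 1 := by
      have := min_le_left (1 / (16 * δ)) B
      rw [le_div_iff₀ (by positivity)] at this
      linarith
    exact fractCount_mul_le_of_forall_norm_sum_le hm.le hδ.le hmδ
      fun K hK hKm ↦ hu K hK (hKm.trans (min_le_right _ _))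
  have hmin : 1 / m ≤ 16 * δ + 1 / B := by
    rcases min_choice (1 / (16 * δ)) B with h | h
    · rw [show m = 1 / (16 * δ) from h, one_div_one_div]
      exact le_add_of_nonneg_right (by positivity)
    · rw [show m = B from h]
      exact le_add_of_nonneg_left (by positivity)
  calc (fractCount u δ N : ℝ) ≤ 32 * N * (1 / m) := by rwa [mul_one_div, le_div_iff₀ hm]
    _ ≤ 32 * N * (16 * δ + 1 / B) := by gcongr
    _ = 512 * (δ * N) + 32 * (N / B) := by ring
    _ ≤ 512 * (δ * N + N / B) := by
      have : 0 ≤ N / B := by positivity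
      linarith

lemma exists_fractCount_eval_le {α : ℝ} (hα : ¬ IsLiouvilleReal α) (k : ℕ) :
    ∃ η ∈ Set.Ioo (0 : ℝ) 1, ∀ (N : ℕ) (f : ℝ[X]) (δ : ℝ),
      f.natDegree ≤ k + 1 → f.coeff 1 = α → 0 < δ →
        (fractCount (fun y ↦ f.eval (y : ℝ)) δ N : ℝ) ≤ 512 * (δ * N + (N : ℝ) ^ (1 - η)) := by
  obtain ⟨D, hD⟩ := exists_mul_norm_weylSum_lt hα k
  have hDη : 1 / (D + 2 : ℝ) * D < 1 := by
    rw [one_div_mul_eq_div, div_lt_one (by positivity)]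
    linarith
  refine ⟨1 / (D + 2), ⟨by positivity, (div_lt_one (by positivity)).2 (by
    linarith [D.cast_nonneg (α := ℝ)])⟩, fun N f δ hf hfα hδ ↦ ?_⟩
  rcases N.eq_zero_or_pos with rfl | hN
  · rw [fractCount, range_zero, filter_empty, card_empty, Nat.cast_zero]
    positivity
  have hNr : (0 : ℝ) < N := by exact_mod_cast hN
  rw [Real.rpow_sub hNr, Real.rpow_one]
  refine fractCount_le_of_forall_norm_sum_le hδ (by positivity) fun K hK hKN h hh hhK ↦ ?_
  have hN1 : (1 : ℝ) < N := by
    by_contra! hle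
    have hK2 : (2 : ℝ) ≤ K := by exact_mod_cast hK
    linarith [Real.rpow_le_one hNr.le hle (by positivity : (0 : ℝ) ≤ 1 / (D + 2))]
  have hKD : K ^ D < N := by
    rw [← Nat.cast_lt (α := ℝ), Nat.cast_pow]
    calc (K : ℝ) ^ D ≤ ((N : ℝ) ^ (1 / (D + 2 : ℝ))) ^ D := by gcongr
      _ = (N : ℝ) ^ (1 / (D + 2 : ℝ) * D) := by rw [Real.rpow_mul hNr.le, Real.rpow_natCast]
      _ < (N : ℝ) ^ (1 : ℝ) := Real.rpow_lt_rpow_of_exponent_lt hN1 hDη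
      _ = N := Real.rpow_one _
  have hweyl := (hD K N f h hK hf hfα (by exact_mod_cast hh) (by omega) hKD).le
  simpa only [weylSum, eval_mul, eval_C, Int.cast_natCast] using hweyl

end FractionalParts

section Equidistribution

open MeasureTheory Filter Topology
open scoped FourierTransform

section CompactSpace

variable {Y : Type*} [TopologicalSpace Y] [CompactSpace Y]

lemma lipschitzWith_sum_div (x : ℕ → Y) (N : ℕ) :
    LipschitzWith 1 fun g : C(Y, ℂ) ↦ (∑ y ∈ range N, g (x y)) / N := by
  refine LipschitzWith.of_dist_le_mul fun f g ↦ ?_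
  rw [dist_eq_norm, ← sub_div, ← sum_sub_distrib, norm_div, Complex.norm_natCast, NNReal.coe_one,
    one_mul]
  refine div_le_of_le_mul₀ N.cast_nonneg dist_nonneg ?_
  refine (norm_sum_le_of_le (n := fun _ ↦ dist f g) _ fun y _ ↦ ?_).trans_eq ?_
  · rw [← dist_eq_norm]
    exact ContinuousMap.dist_apply_le_dist _
  · rw [sum_const, card_range, nsmul_eq_mul, mul_comm]

variable [MeasurableSpace Y] [OpensMeasurableSpace Y]

lemma integrable_of_compactSpace {E : Type*} [NormedAddCommGroup E]
    [SecondCountableTopologyEither Y E] (μ : Measure Y) [IsFiniteMeasure μ] (g : C(Y, E)) :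
    Integrable g μ :=
  g.continuous.integrable_of_hasCompactSupport (.of_compactSpace _)

lemma lipschitzWith_integral (μ : Measure Y) [IsProbabilityMeasure μ] :
    LipschitzWith 1 fun g : C(Y, ℂ) ↦ ∫ t, g t ∂μ := by
  refine LipschitzWith.of_dist_le_mul fun f g ↦ ?_
  rw [dist_eq_norm, NNReal.coe_one, one_mul,
    ← integral_sub (integrable_of_compactSpace μ f) (integrable_of_compactSpace μ g)]
  refine (norm_integral_le_of_norm_le_const (C := dist f g) (.of_forall fun t ↦ ?_)).trans_eq ?_
  · rw [← dist_eq_norm]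
    exact ContinuousMap.dist_apply_le_dist t
  · rw [probReal_univ, mul_one]

end CompactSpace

variable {T : ℝ} [Fact (0 < T)] {x : ℕ → AddCircle T}

lemma integral_fourier (n : ℤ) :
    ∫ t, fourier n t ∂(AddCircle.haarAddCircle (T := T)) = if n = 0 then 1 else 0 := by
  have hcoeff := congrFun (fourierCoeff_fourier (T := T) n) 0
  simpa only [fourierCoeff, neg_zero, fourier_zero, one_smul, Pi.single_apply, eq_comm] using hcoeff

/-- Weyl's criterion. -/
lemma tendsto_sum_div_of_tendsto_sum_fourier_div
    (hx : ∀ h : ℤ, h ≠ 0 → Tendsto (fun N : ℕ ↦ (∑ y ∈ range N, fourier h (x y)) / N) atTop (𝓝 0))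
    (g : C(AddCircle T, ℂ)) :
    Tendsto (fun N : ℕ ↦ (∑ y ∈ range N, g (x y)) / N) atTop
      (𝓝 (∫ t, g t ∂AddCircle.haarAddCircle)) := by
  have hspan : ∀ g ∈ Submodule.span ℂ (Set.range (fourier (T := T))),
      Tendsto (fun N : ℕ ↦ (∑ y ∈ range N, g (x y)) / N) atTop
        (𝓝 (∫ t, g t ∂AddCircle.haarAddCircle)) := by
    intro g hg
    induction hg using Submodule.span_induction with
    | mem g hg =>
      obtain ⟨n, rfl⟩ := hg
      rw [integral_fourier]
      split_ifs with hn
      · refine tendsto_const_nhds.congr' ?_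
        filter_upwards [eventually_ne_atTop 0] with N hN
        simp [hn, hN]
      · exact hx n hn
    | zero => simp
    | add f g _ _ hf hg =>
      simp only [ContinuousMap.add_apply, sum_add_distrib, add_div]
      rw [integral_add (integrable_of_compactSpace _ f) (integrable_of_compactSpace _ g)]
      exact hf.add hg
    | smul a f _ hf =>
      simp only [ContinuousMap.smul_apply, smul_eq_mul, ← mul_sum, mul_div_assoc]
      rw [integral_const_mul]
      exact hf.const_mul a
  have hclosed : IsClosed {g : C(AddCircle T, ℂ) | Tendsto (fun N : ℕ ↦
      (∑ y ∈ range N, g (x y)) / N) atTop (𝓝 (∫ t, g t ∂AddCircle.haarAddCircle))} :=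
    (LipschitzWith.uniformEquicontinuous _ 1 (lipschitzWith_sum_div x)).equicontinuous
      |>.isClosed_setOfPred_tendsto (lipschitzWith_integral _).continuous
  have hmem : g ∈ (Submodule.span ℂ (Set.range (fourier (T := T)))).topologicalClosure := by
    rw [span_fourier_closure_eq_top]
    trivial
  exact closure_minimal hspan hclosed hmem

lemma eventually_card_filter_mem_le
    (hx : ∀ h : ℤ, h ≠ 0 → Tendsto (fun N : ℕ ↦ (∑ y ∈ range N, fourier h (x y)) / N) atTop (𝓝 0))
    {F : Set (AddCircle T)} [DecidablePred (· ∈ F)] (hF : IsClosed F) {c : ℝ}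
    (hc : (AddCircle.haarAddCircle (T := T)).real F < c) :
    ∀ᶠ N : ℕ in atTop, (#{y ∈ range N | x y ∈ F} : ℝ) ≤ c * N := by
  obtain ⟨U, hFU, hU, hUc⟩ := F.exists_isOpen_lt_of_lt (μ := AddCircle.haarAddCircle)
    (ENNReal.ofReal c) ((ENNReal.lt_ofReal_iff_toReal_lt (measure_ne_top _ _)).2 hc)
  rw [ENNReal.lt_ofReal_iff_toReal_lt (measure_ne_top _ _)] at hUc
  obtain ⟨g, hg0, hg1, hg⟩ := exists_continuous_zero_one_of_isClosed hU.isClosed_compl hF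
    (Set.disjoint_compl_left_iff_subset.2 hFU)
  have hgU : ∫ t, g t ∂AddCircle.haarAddCircle < c := by
    refine lt_of_le_of_lt ?_ hUc
    rw [← measureReal_def, ← integral_indicator_one hU.measurableSet]
    refine integral_mono (integrable_of_compactSpace _ g)
      ((integrable_const 1).indicator hU.measurableSet) fun t ↦ ?_
    by_cases ht : t ∈ U
    · exact (hg t).2.trans_eq (Set.indicator_of_mem ht 1).symm
    · exact (hg0 ht).trans_le (Set.indicator_of_notMem ht 1).ge
  have hmean : Tendsto (fun N : ℕ ↦ (∑ y ∈ range N, g (x y)) / N) atTop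
      (𝓝 (∫ t, g t ∂AddCircle.haarAddCircle)) := by
    have hC := tendsto_sum_div_of_tendsto_sum_fourier_div hx ⟨fun t ↦ (g t : ℂ), by fun_prop⟩
    simp only [ContinuousMap.coe_mk, integral_complex_ofReal] at hC
    exact tendsto_ofReal_iff.1 (by exact_mod_cast hC)
  filter_upwards [hmean.eventually_lt_const hgU, eventually_gt_atTop 0] with N hN hN0
  rw [div_lt_iff₀ (by exact_mod_cast hN0)] at hN
  refine le_trans ?_ hN.le
  rw [card_filter, Nat.cast_sum]
  refine sum_le_sum fun y _ ↦ ?_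
  split_ifs with hy
  · rw [hg1 hy, Nat.cast_one, Pi.one_apply]
  · exact_mod_cast (hg _).1

variable {u : ℕ → ℝ}

lemma eventually_card_filter_fract_mem_Icc_le
    (hu : ∀ h : ℤ, h ≠ 0 →
      Tendsto (fun N : ℕ ↦ (∑ y ∈ range N, (𝐞 (h * u y) : ℂ)) / N) atTop (𝓝 0))
    {a b c : ℝ} (hab : a ≤ b) (hba : b ≤ a + 1) (hc : b - a < c) :
    ∀ᶠ N : ℕ in atTop, (#{y ∈ range N | Int.fract (u y) ∈ Set.Icc a b} : ℝ) ≤ c * N := by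
  classical
  have hfourier : ∀ (h : ℤ) (t : ℝ), fourier h (t : UnitAddCircle) = (𝐞 (h * t) : ℂ) := by
    intro h t
    rw [fourier_coe_apply, Real.fourierChar_apply]
    push_cast
    ring_nf
  have hball : AddCircle.haarAddCircle.real
      (Metric.closedBall (((a + b) / 2 : ℝ) : UnitAddCircle) ((b - a) / 2)) = b - a := by
    have hvol : (volume : Measure UnitAddCircle) = AddCircle.haarAddCircle := by
      rw [AddCircle.volume_eq_smul_haarAddCircle, ENNReal.ofReal_one, one_smul]
    rw [← hvol, measureReal_def, AddCircle.volume_closedBall, mul_div_cancel₀ _ two_ne_zero,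
      min_eq_right (by linarith), ENNReal.toReal_ofReal (by linarith)]
  have hev := eventually_card_filter_mem_le (x := fun y ↦ (u y : UnitAddCircle))
    (by simpa only [hfourier] using hu) Metric.isClosed_closedBall (hball.trans_lt hc)
  filter_upwards [hev] with N hN
  refine le_trans ?_ hN
  gcongr with y
  rintro ⟨hay, hyb⟩
  rw [← AddCircle.coe_fract (u y), mem_closedBall_iff_norm, ← AddCircle.coe_sub]
  refine QuotientAddGroup.norm_mk_le_norm.trans ?_
  rw [Real.norm_eq_abs, abs_le]
  constructor <;> linarith

lemma tendsto_fractCount_div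
    (hu : ∀ h : ℤ, h ≠ 0 →
      Tendsto (fun N : ℕ ↦ (∑ y ∈ range N, (𝐞 (h * u y) : ℂ)) / N) atTop (𝓝 0))
    {b : ℝ} (hb : 0 ≤ b) (hb1 : b ≤ 1) :
    Tendsto (fun N : ℕ ↦ (fractCount u b N : ℝ) / N) atTop (𝓝 b) := by
  have hupper : ∀ c > b, ∀ᶠ N : ℕ in atTop, (fractCount u b N : ℝ) / N ≤ c := by
    intro c hc
    filter_upwards [eventually_card_filter_fract_mem_Icc_le hu hb (by linarith)
      (by rwa [sub_zero] : b - 0 < c)] with N hN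
    refine div_le_of_le_mul₀ N.cast_nonneg (hb.trans hc.le) (le_trans ?_ hN)
    rw [fractCount]
    gcongr with y
    exact fun hy ↦ ⟨Int.fract_nonneg _, hy.le⟩
  have hlower : ∀ c < b, ∀ᶠ N : ℕ in atTop, c ≤ (fractCount u b N : ℝ) / N := by
    intro c hc
    filter_upwards [eventually_gt_atTop 0, eventually_card_filter_fract_mem_Icc_le hu hb1
      (by linarith) (sub_lt_sub_left hc 1)] with N hN0 hN
    have hcompl : N ≤ fractCount u b N + #{y ∈ range N | Int.fract (u y) ∈ Set.Icc b 1} := by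
      conv_lhs => rw [← card_range N,
        ← card_filter_add_card_filter_not (s := range N) (fun y ↦ Int.fract (u y) < b)]
      rw [fractCount]
      gcongr with y
      exact fun hy ↦ ⟨not_lt.1 hy, (Int.fract_lt_one _).le⟩
    rw [le_div_iff₀ (by exact_mod_cast hN0)]
    have : (N : ℝ) ≤ fractCount u b N + #{y ∈ range N | Int.fract (u y) ∈ Set.Icc b 1} := by
      exact_mod_cast hcompl
    linarith
  refine tendsto_order.2 ⟨fun c hc ↦ ?_, fun c hc ↦ ?_⟩
  · obtain ⟨c', hcc', hc'⟩ := exists_between hc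
    exact (hlower c' hc').mono fun N hN ↦ hcc'.trans_le hN
  · obtain ⟨c', hc', hcc'⟩ := exists_between hc
    exact (hupper c' hc').mono fun N hN ↦ hN.trans_lt hcc'

end Equidistribution

section Dilation

open Polynomial Filter Topology
open scoped FourierTransform

/-- The polynomial `P(d x) / d`. Since `d ∣ ⌊t⌋` exactly when `Int.fract (t / d) < 1 / d`, its
fractional parts at integers `y` detect the integers `x = d y` for which `d` divides both `x` and
`⌊P(x)⌋`. -/
noncomputable def dilation (P : ℝ[X]) (d : ℕ) : ℝ[X] := C (1 / (d : ℝ)) * P.comp (C (d : ℝ) * X)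

lemma eval_dilation (P : ℝ[X]) (d : ℕ) (y : ℝ) : (dilation P d).eval y = P.eval (d * y) / d := by
  simp only [dilation, eval_mul, eval_C, eval_comp, eval_X, one_div_mul_eq_div]

lemma natDegree_dilation_le (P : ℝ[X]) (d : ℕ) : (dilation P d).natDegree ≤ P.natDegree := by
  refine (natDegree_C_mul_le _ _).trans (natDegree_comp_le.trans ?_)
  exact mul_le_of_le_one_right (Nat.zero_le _) ((natDegree_C_mul_le _ _).trans natDegree_X_le)

lemma coeff_one_dilation (P : ℝ[X]) {d : ℕ} (hd : d ≠ 0) :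
    (dilation P d).coeff 1 = P.coeff 1 := by
  rw [dilation, coeff_C_mul, comp_C_mul_X_coeff, pow_one, one_div, mul_comm, mul_assoc,
    mul_inv_cancel₀ (by exact_mod_cast hd), mul_one]

lemma dvd_floor_iff_fract_div_lt {d : ℕ} (hd : d ≠ 0) (t : ℝ) :
    (d : ℤ) ∣ ⌊t⌋ ↔ Int.fract (t / d) < 1 / d := by
  have hdr : (0 : ℝ) < d := by positivity
  have hmod : 0 ≤ ⌊t⌋ % (d : ℤ) := Int.emod_nonneg _ (by exact_mod_cast hd)
  calc (d : ℤ) ∣ ⌊t⌋ ↔ ⌊t⌋ % d ≤ 0 := by rw [Int.dvd_iff_emod_eq_zero, hmod.ge_iff_eq']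
    _ ↔ ⌊t⌋ < d * ⌊t / d⌋ + 1 := by
      rw [Int.floor_div_natCast, Int.emod_def, sub_nonpos, Int.lt_add_one_iff]
    _ ↔ t < d * ⌊t / d⌋ + 1 := by rw [Int.floor_lt]; push_cast; rfl
    _ ↔ Int.fract (t / d) < 1 / d := by
      rw [Int.fract, sub_lt_iff_lt_add, div_lt_iff₀ hdr, add_mul, one_div_mul_cancel hdr.ne',
        add_comm, mul_comm]

lemma AP_eq_image {P : ℝ[X]} {d : ℕ} (hd : d ≠ 0) (X : ℝ) :
    AP P d X = ({y ∈ range (⌊X / d⌋₊ + 1) |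
      Int.fract ((dilation P d).eval ((y : ℕ) : ℝ)) < 1 / d}.erase 0).image (d * ·) := by
  ext x
  simp only [AP, mem_filter, mem_Icc, mem_image, mem_erase, mem_range, Nat.lt_succ_iff,
    Nat.floor_div_natCast, Nat.le_div_iff_mul_le (Nat.pos_of_ne_zero hd), eval_dilation,
    ← dvd_floor_iff_fract_div_lt hd, Int.natCast_dvd_natCast]
  constructor
  · rintro ⟨⟨hx, hxX⟩, ⟨y, rfl⟩, hy⟩
    exact ⟨y, ⟨(Nat.pos_of_mul_pos_left hx).ne', by rwa [mul_comm], by exact_mod_cast hy⟩, rfl⟩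
  · rintro ⟨y, ⟨hy0, hyX, hy⟩, rfl⟩
    exact ⟨⟨Nat.mul_pos (Nat.pos_of_ne_zero hd) (Nat.pos_of_ne_zero hy0), by rwa [mul_comm]⟩,
      dvd_mul_right _ _, by exact_mod_cast hy⟩

lemma card_AP_le_fractCount (P : ℝ[X]) {d : ℕ} (hd : d ≠ 0) (X : ℝ) :
    #(AP P d X) ≤ fractCount (fun y ↦ (dilation P d).eval (y : ℝ)) (1 / d) (⌊X / d⌋₊ + 1) := by
  rw [AP_eq_image hd]
  exact card_image_le.trans card_erase_le

lemma fractCount_le_card_AP_add_one (P : ℝ[X]) {d : ℕ} (hd : d ≠ 0) (X : ℝ) :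
    fractCount (fun y ↦ (dilation P d).eval (y : ℝ)) (1 / d) (⌊X / d⌋₊ + 1) ≤
      #(AP P d X) + 1 := by
  rw [AP_eq_image hd, card_image_of_injective _ (mul_right_injective₀ hd), ← tsub_le_iff_right]
  exact pred_card_le_card_erase

lemma tendsto_floor_div_add_one_div_atTop (d : ℕ) :
    Tendsto (fun X : ℝ ↦ ((⌊X / d⌋₊ + 1 : ℕ) : ℝ) / X) atTop (𝓝 (1 / d)) := by
  have h := (tendsto_nat_floor_mul_div_atTop (R := ℝ) (a := 1 / d) (by positivity)).add
    tendsto_inv_atTop_zero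
  simpa only [Nat.cast_add, Nat.cast_one, add_div, one_div, inv_mul_eq_div, add_zero] using h

variable {P : ℝ[X]}

lemma tendsto_sum_fourierChar_dilation (hP : ¬ IsLiouvilleReal (P.coeff 1)) {d : ℕ} (hd : d ≠ 0)
    {h : ℤ} (hh : h ≠ 0) :
    Tendsto (fun N : ℕ ↦
      (∑ y ∈ range N, (𝐞 (h * (dilation P d).eval (y : ℝ)) : ℂ)) / N) atTop (𝓝 0) := by
  obtain ⟨D, hD⟩ := exists_mul_norm_weylSum_lt hP P.natDegree
  rw [Metric.tendsto_atTop]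
  intro ε hε
  obtain ⟨n, hn⟩ := exists_nat_gt (1 / ε)
  set K := n + 2 + h.natAbs
  refine ⟨K ^ D + 1, fun N hN ↦ ?_⟩
  have hNr : (0 : ℝ) < N := by exact_mod_cast (by omega : 0 < N)
  have hweyl : K * ‖weylSum (C (h : ℝ) * dilation P d) N‖ < N :=
    hD K N _ h (by omega) ((natDegree_dilation_le P d).trans (Nat.le_succ _))
      (coeff_one_dilation P hd) hh (by omega) (by omega)
  simp only [weylSum, eval_mul, eval_C] at hweyl
  have hK : 1 < K * ε := by
    rw [← div_lt_iff₀ hε]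
    exact hn.trans_le (by exact_mod_cast (by omega : n ≤ K))
  rw [dist_zero_right, norm_div, Complex.norm_natCast, div_lt_iff₀ hNr]
  refine lt_of_mul_lt_mul_left (hweyl.trans ?_) K.cast_nonneg
  nlinarith

lemma tendsto_card_AP_div (hP : ¬ IsLiouvilleReal (P.coeff 1)) {d : ℕ} (hd : d ≠ 0) :
    Tendsto (fun X : ℝ ↦ (#(AP P d X) : ℝ) / X) atTop (𝓝 (1 / (d : ℝ) ^ 2)) := by
  have hdr : (1 : ℝ) ≤ d := by exact_mod_cast Nat.one_le_iff_ne_zero.2 hd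
  have hN : Tendsto (fun X : ℝ ↦ ⌊X / d⌋₊ + 1) atTop atTop :=
    tendsto_atTop_mono (fun _ ↦ Nat.le_succ _)
      (tendsto_nat_floor_atTop.comp (tendsto_id.atTop_div_const (by linarith)))
  have hcount : Tendsto (fun X : ℝ ↦ (fractCount (fun y ↦ (dilation P d).eval (y : ℝ)) (1 / d)
      (⌊X / d⌋₊ + 1) : ℝ) / X) atTop (𝓝 (1 / (d : ℝ) ^ 2)) := by
    have hdensity := tendsto_fractCount_div (b := 1 / d)
      (fun h hh ↦ tendsto_sum_fourierChar_dilation hP hd hh) (by positivity)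
      ((div_le_one (by linarith)).2 hdr)
    have hprod := (hdensity.comp hN).mul (tendsto_floor_div_add_one_div_atTop d)
    rw [one_div_mul_one_div, ← sq] at hprod
    refine hprod.congr fun X ↦ ?_
    exact div_mul_div_cancel₀ (by positivity)
  have hlower := hcount.sub tendsto_inv_atTop_zero
  rw [sub_zero] at hlower
  refine tendsto_of_tendsto_of_tendsto_of_le_of_le' hlower hcount ?_ ?_
  · filter_upwards [eventually_gt_atTop 0] with X hX
    rw [← one_div, ← sub_div]
    gcongr
    rw [sub_le_iff_le_add]
    exact_mod_cast fractCount_le_card_AP_add_one P hd X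
  · filter_upwards [eventually_gt_atTop 0] with X hX
    gcongr
    exact card_AP_le_fractCount P hd X

lemma exists_card_AP_le (hP : ¬ IsLiouvilleReal (P.coeff 1)) :
    ∃ η ∈ Set.Ioo (0 : ℝ) 1, ∀ (d : ℕ) (X : ℝ), d ≠ 0 → (d : ℝ) ≤ X →
      (#(AP P d X) : ℝ) ≤ 1024 * (X * ((d : ℝ) ^ 2)⁻¹ + (X / d) ^ (1 - η)) := by
  obtain ⟨η, hη, hcount⟩ := exists_fractCount_eval_le hP P.natDegree
  refine ⟨η, hη, fun d X hd hdX ↦ ?_⟩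
  have hdr : (0 : ℝ) < d := by positivity
  have hXd : 1 ≤ X / d := (one_le_div₀ hdr).2 hdX
  have hN : ((⌊X / d⌋₊ + 1 : ℕ) : ℝ) ≤ 2 * (X / d) := by
    push_cast
    linarith [Nat.floor_le (zero_le_one.trans hXd)]
  calc (#(AP P d X) : ℝ)
      ≤ 512 * (1 / d * (⌊X / d⌋₊ + 1 : ℕ) + ((⌊X / d⌋₊ + 1 : ℕ) : ℝ) ^ (1 - η)) :=
        (Nat.cast_le.2 (card_AP_le_fractCount P hd X)).trans
          (hcount _ _ _ ((natDegree_dilation_le P d).trans (Nat.le_succ _))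
            (coeff_one_dilation P hd) (by positivity))
    _ ≤ 512 * (1 / d * (2 * (X / d)) + (2 * (X / d)) ^ (1 - η)) := by
        have := hη.2
        gcongr
    _ ≤ 512 * (1 / d * (2 * (X / d)) + 2 * (X / d) ^ (1 - η)) := by
        rw [Real.mul_rpow zero_le_two (zero_le_one.trans hXd)]
        gcongr
        exact Real.rpow_le_self_of_one_le one_le_two (by linarith [hη.1])
    _ = 1024 * (X * ((d : ℝ) ^ 2)⁻¹ + (X / d) ^ (1 - η)) := by ring

end Dilation

section LargePrimes

open Filter Topology

lemma sum_Icc_rpow_sub_one_le {η : ℝ} (hη : η ∈ Set.Ioo (0 : ℝ) 1) (m : ℕ) :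
    ∑ n ∈ Icc 1 m, (n : ℝ) ^ (η - 1) ≤ (m : ℝ) ^ η / η := by
  induction m with
  | zero => simp [Real.zero_rpow hη.1.ne']
  | succ m ih =>
    have hm : (0 : ℝ) < (m + 1 : ℕ) := by positivity
    have hbernoulli : ((m : ℝ) / (m + 1 : ℕ)) ^ η ≤ 1 - η / (m + 1 : ℕ) := by
      have hs : 1 + -1 / ((m + 1 : ℕ) : ℝ) = m / (m + 1 : ℕ) := by
        push_cast
        field_simp
        ring
      have h := rpow_one_add_le_one_add_mul_self (s := -1 / ((m + 1 : ℕ) : ℝ))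
        (by rw [neg_div, neg_le_neg_iff, div_le_one hm]; exact_mod_cast Nat.le_add_left 1 m)
        hη.1.le hη.2.le
      rw [hs] at h
      exact h.trans_eq (by ring)
    rw [Real.div_rpow m.cast_nonneg hm.le, div_le_iff₀ (by positivity)] at hbernoulli
    rw [sum_Icc_succ_top (Nat.le_add_left 1 m), le_div_iff₀ hη.1]
    rw [le_div_iff₀ hη.1] at ih
    calc (∑ n ∈ Icc 1 m, (n : ℝ) ^ (η - 1) + ((m + 1 : ℕ) : ℝ) ^ (η - 1)) * η
        ≤ (1 - η / (m + 1 : ℕ)) * ((m + 1 : ℕ) : ℝ) ^ η + ((m + 1 : ℕ) : ℝ) ^ (η - 1) * η := by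
          rw [add_mul]
          exact add_le_add_left (ih.trans hbernoulli) _
      _ = ((m + 1 : ℕ) : ℝ) ^ η := by
          rw [Real.rpow_sub_one hm.ne']
          ring

lemma eventually_primeCounting_floor_le {ε : ℝ} (hε : 0 < ε) :
    ∀ᶠ X : ℝ in atTop, (⌊X⌋₊.primeCounting : ℝ) ≤ ε * X := by
  filter_upwards [Chebyshev.eventually_primeCounting_le one_pos, eventually_gt_atTop 1,
    Real.tendsto_log_atTop.eventually_ge_atTop ((Real.log 4 + 1) / ε)] with X hπ hX hlog
  have hlog0 : 0 < Real.log X := Real.log_pos hX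
  rw [div_le_iff₀ hε] at hlog
  refine hπ.trans ?_
  rw [div_le_iff₀ hlog0]
  nlinarith

lemma sum_Icc_div_rpow_le {η δ X : ℝ} (hη : η ∈ Set.Ioo (0 : ℝ) 1) (hδ : 0 ≤ δ) (hX : 0 < X) :
    ∑ n ∈ Icc 1 ⌊δ * X⌋₊, (X / n) ^ (1 - η) ≤ δ ^ η / η * X := by
  have hη0 := hη.1
  calc ∑ n ∈ Icc 1 ⌊δ * X⌋₊, (X / n) ^ (1 - η)
      = X ^ (1 - η) * ∑ n ∈ Icc 1 ⌊δ * X⌋₊, (n : ℝ) ^ (η - 1) := by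
        rw [mul_sum]
        refine sum_congr rfl fun n _ ↦ ?_
        rw [Real.div_rpow hX.le n.cast_nonneg, ← neg_sub 1 η, Real.rpow_neg n.cast_nonneg,
          div_eq_mul_inv]
    _ ≤ X ^ (1 - η) * ((δ * X) ^ η / η) := by
        gcongr
        refine (sum_Icc_rpow_sub_one_le hη _).trans ?_
        gcongr
        exact Nat.floor_le (by positivity)
    _ = δ ^ η / η * X := by
        rw [Real.mul_rpow hδ hX.le, Real.rpow_sub hX, Real.rpow_one]
        field_simp

lemma sum_filter_prime_div_rpow_le {η δ X : ℝ} (hη : η ∈ Set.Ioo (0 : ℝ) 1) (hδ : 0 < δ)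
    (hX : 0 < X) :
    ∑ p ∈ Icc 1 ⌊X⌋₊ with p.Prime, (X / p) ^ (1 - η) ≤
      δ ^ η / η * X + ⌊X⌋₊.primeCounting / δ := by
  have hsmall : ∑ p ∈ Icc 1 ⌊X⌋₊ with p.Prime ∧ p ≤ ⌊δ * X⌋₊, (X / p) ^ (1 - η) ≤
      δ ^ η / η * X := by
    refine (sum_le_sum_of_subset_of_nonneg (fun p hp ↦ ?_) fun _ _ _ ↦ by positivity).trans
      (sum_Icc_div_rpow_le hη hδ.le hX)
    rw [mem_filter, mem_Icc] at hp
    exact mem_Icc.2 ⟨hp.1.1, hp.2.2⟩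
  have hterm : ∀ p ∈ Icc 1 ⌊X⌋₊, p.Prime ∧ ¬ p ≤ ⌊δ * X⌋₊ → (X / p) ^ (1 - η) ≤ 1 / δ := by
    rintro p hp ⟨hprime, hpδ⟩
    have hp0 : (0 : ℝ) < p := by exact_mod_cast hprime.pos
    have hpX : (p : ℝ) ≤ X := (Nat.le_floor_iff hX.le).1 (mem_Icc.1 hp).2
    refine (Real.rpow_le_self_of_one_le ((one_le_div₀ hp0).2 hpX) (by linarith [hη.1])).trans ?_
    rw [div_le_div_iff₀ hp0 hδ]
    linarith [Nat.lt_of_floor_lt (not_le.1 hpδ)]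
  have hcard : #{p ∈ Icc 1 ⌊X⌋₊ | p.Prime ∧ ¬ p ≤ ⌊δ * X⌋₊} ≤ ⌊X⌋₊.primeCounting := by
    rw [Nat.primeCounting, Nat.primeCounting', Nat.count_eq_card_filter_range]
    refine card_le_card fun p hp ↦ ?_
    rw [mem_filter, mem_Icc] at hp
    exact mem_filter.2 ⟨mem_range_succ_iff.2 hp.1.2, hp.2.1⟩
  have hlarge : ∑ p ∈ Icc 1 ⌊X⌋₊ with p.Prime ∧ ¬ p ≤ ⌊δ * X⌋₊, (X / p) ^ (1 - η) ≤
      ⌊X⌋₊.primeCounting / δ := by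
    refine (sum_le_card_nsmul _ _ (1 / δ) fun p hp ↦
      hterm p (mem_filter.1 hp).1 (mem_filter.1 hp).2).trans ?_
    rw [nsmul_eq_mul, mul_one_div]
    gcongr
  rw [← sum_filter_add_sum_filter_not _ (· ≤ ⌊δ * X⌋₊), filter_filter, filter_filter]
  exact add_le_add hsmall hlarge

lemma eventually_sum_filter_prime_div_rpow_le {η ε : ℝ} (hη : η ∈ Set.Ioo (0 : ℝ) 1)
    (hε : 0 < ε) :
    ∀ᶠ X : ℝ in atTop, ∑ p ∈ Icc 1 ⌊X⌋₊ with p.Prime, (X / p) ^ (1 - η) ≤ ε * X := by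
  obtain ⟨δ, hδε, hδ⟩ : ∃ δ : ℝ, δ ^ η / η < ε / 2 ∧ 0 < δ := by
    have hlim : Tendsto (fun δ : ℝ ↦ δ ^ η / η) (𝓝[>] 0) (𝓝 0) := by
      have h := ((Real.continuousAt_rpow_const 0 η (.inr hη.1.le)).div_const η).tendsto
      rw [Real.zero_rpow hη.1.ne', zero_div] at h
      exact h.mono_left nhdsWithin_le_nhds
    exact ((hlim.eventually_lt_const (half_pos hε)).and self_mem_nhdsWithin).exists
  filter_upwards [eventually_gt_atTop 0,
    eventually_primeCounting_floor_le (ε := ε / 2 * δ) (by positivity)] with X hX hπ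
  calc ∑ p ∈ Icc 1 ⌊X⌋₊ with p.Prime, (X / p) ^ (1 - η)
      ≤ δ ^ η / η * X + ⌊X⌋₊.primeCounting / δ := sum_filter_prime_div_rpow_le hη hδ hX
    _ ≤ ε / 2 * X + ε / 2 * δ * X / δ := by gcongr
    _ = ε * X := by field_simp; ring

lemma sum_Icc_inv_sq_le {n : ℕ} (hn : n ≠ 0) (m : ℕ) :
    ∑ i ∈ Icc n m, ((i : ℝ) ^ 2)⁻¹ ≤ 2 / n := by
  obtain ⟨k, rfl⟩ := Nat.exists_eq_succ_of_ne_zero hn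
  have h := sum_Ioo_inv_sq_le (α := ℝ) k (m + 1)
  rwa [show Ioo k (m + 1) = Icc (k + 1) m by ext; simp only [mem_Ioo, mem_Icc]; omega,
    ← Nat.cast_succ] at h

lemma eventually_eventually_sum_card_AP_le {P : Polynomial ℝ}
    (hP : ¬ IsLiouvilleReal (P.coeff 1)) {ε : ℝ} (hε : 0 < ε) :
    ∀ᶠ n : ℕ in atTop, ∀ᶠ X : ℝ in atTop,
      (∑ p ∈ Icc n ⌊X⌋₊ with p.Prime, #(AP P p X) : ℝ) ≤ ε * X := by
  obtain ⟨η, hη, hAP⟩ := exists_card_AP_le hP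
  have hlim : Tendsto (fun n : ℕ ↦ (2 / n : ℝ)) atTop (𝓝 0) :=
    tendsto_const_div_atTop_nhds_zero_nat 2
  filter_upwards [hlim.eventually_lt_const (show 0 < ε / 2048 by positivity),
    eventually_ge_atTop 1] with n hnε hn
  filter_upwards [eventually_gt_atTop 0,
    eventually_sum_filter_prime_div_rpow_le hη (show 0 < ε / 2048 by positivity)] with X hX hsum
  calc (∑ p ∈ Icc n ⌊X⌋₊ with p.Prime, #(AP P p X) : ℝ)
      ≤ ∑ p ∈ Icc n ⌊X⌋₊ with p.Prime, 1024 * (X * ((p : ℝ) ^ 2)⁻¹ + (X / p) ^ (1 - η)) := by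
        refine sum_le_sum fun p hp ↦ ?_
        rw [mem_filter, mem_Icc] at hp
        exact hAP p X hp.2.ne_zero ((Nat.le_floor_iff hX.le).1 hp.1.2)
    _ = 1024 * (X * ∑ p ∈ Icc n ⌊X⌋₊ with p.Prime, ((p : ℝ) ^ 2)⁻¹ +
          ∑ p ∈ Icc n ⌊X⌋₊ with p.Prime, (X / p) ^ (1 - η)) := by
        rw [← mul_sum, sum_add_distrib, ← mul_sum]
    _ ≤ 1024 * (X * (ε / 2048) + ε / 2048 * X) := by
        gcongr
        · refine le_trans (sum_le_sum_of_subset_of_nonneg (filter_subset _ _)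
            fun _ _ _ ↦ by positivity) ((sum_Icc_inv_sq_le (by omega) _).trans hnε.le)
        · refine (sum_le_sum_of_subset_of_nonneg ?_ fun _ _ _ ↦ by positivity).trans hsum
          gcongr
    _ = ε * X := by ring

end LargePrimes

section Sieve

open Filter Topology ArithmeticFunction
open scoped ArithmeticFunction.Moebius

/-- The integer `gcd(x, ⌊P(x)⌋)` at a natural argument `x`, whose divisors the sieve detects. -/
noncomputable def gcdFloor (P : Polynomial ℝ) (x : ℕ) : ℕ := Int.gcd (x : ℤ) ⌊P.eval (x : ℝ)⌋

-- In the definitions of `S` and `S2` the filtered variable is elaborated as an integer, so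
-- `Icc 1 ⌊X⌋₊` is coerced to a `Finset ℤ` through the monad structure of `Finset`.
open Classical in
lemma card_filter_natCast (s : Finset ℕ) (q : ℤ → Prop) [DecidablePred q] :
    #{x ∈ (do let a ← s; pure (a : ℤ) : Finset ℤ) | q x} =
      #(s.filter fun a : ℕ ↦ q a) := by
  rw [← card_image_of_injective _ (Nat.cast_injective (R := ℤ))]
  congr 1
  ext x
  simp only [mem_filter, mem_image, Finset.bind_def, pure_def, Finset.mem_sup,
    mem_singleton]
  constructor
  · rintro ⟨⟨a, ha, rfl⟩, hq⟩
    exact ⟨a, ⟨ha, hq⟩, rfl⟩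
  · rintro ⟨a, ⟨ha, hq⟩, rfl⟩
    exact ⟨⟨a, ha, rfl⟩, hq⟩

lemma S_eq_card_filter (P : Polynomial ℝ) (X : ℝ) :
    S P X = #{x ∈ Icc 1 ⌊X⌋₊ | gcdFloor P x = 1} := by
  rw [S, card_filter_natCast]
  simp only [Int.cast_natCast]
  rfl

lemma S2_eq_card_filter (P : Polynomial ℝ) (X z : ℝ) :
    S2 P X z = #{x ∈ Icc 1 ⌊X⌋₊ | (gcdFloor P x).gcd (Pz z) = 1} := by
  rw [S2, card_filter_natCast]
  simp only [Int.cast_natCast]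
  rfl

lemma AP_eq_filter_dvd_gcdFloor (P : Polynomial ℝ) (d : ℕ) (X : ℝ) :
    AP P d X = {x ∈ Icc 1 ⌊X⌋₊ | d ∣ gcdFloor P x} := by
  ext x
  rw [AP, mem_filter, mem_filter, gcdFloor, ← Int.natCast_dvd_natCast, Int.dvd_coe_gcd_iff]

lemma primesLt_natCast (n : ℕ) : primesLt n = n.primesBelow := by
  ext p
  simp only [primesLt, mem_filter, mem_range, Nat.ceil_natCast, Nat.cast_lt, Nat.mem_primesBelow]
  tauto

lemma prime_of_mem_primesLt {z : ℝ} {p : ℕ} (hp : p ∈ primesLt z) : p.Prime :=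
  (mem_filter.1 hp).2.1

lemma primeFactors_Pz (z : ℝ) : (Pz z).primeFactors = primesLt z :=
  Nat.primeFactors_prod fun _ ↦ prime_of_mem_primesLt

lemma squarefree_Pz (z : ℝ) : Squarefree (Pz z) :=
  squarefree_prod_of_pairwise_isCoprime
    (fun _ hp _ hq hpq ↦ Nat.coprime_iff_isRelPrime.1 <|
      (Nat.coprime_primes (prime_of_mem_primesLt hp) (prime_of_mem_primesLt hq)).2 hpq)
    fun _ hp ↦ (prime_of_mem_primesLt hp).prime.squarefree

lemma ite_gcd_eq_one_eq_sum_moebius (g : ℕ) {N : ℕ} (hN : N ≠ 0) :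
    (if g.gcd N = 1 then (1 : ℤ) else 0) = ∑ d ∈ N.divisors, if d ∣ g then μ d else 0 := by
  calc (if g.gcd N = 1 then (1 : ℤ) else 0)
      = ∑ d ∈ (g.gcd N).divisors, μ d := by
        rw [← coe_mul_zeta_apply, moebius_mul_coe_zeta, one_apply]
    _ = ∑ d ∈ N.divisors, if d ∣ g then μ d else 0 := by
        rw [← sum_filter, ← Nat.divisors_filter_dvd_of_dvd hN (Nat.gcd_dvd_right g N)]
        refine sum_congr (filter_congr fun d hd ↦ ?_) fun _ _ ↦ rfl
        rw [Nat.dvd_gcd_iff, and_iff_left (Nat.dvd_of_mem_divisors hd)]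

lemma S2_eq_sum_moebius (P : Polynomial ℝ) (X z : ℝ) :
    (S2 P X z : ℤ) = ∑ d ∈ (Pz z).divisors, μ d * #(AP P d X) := by
  rw [S2_eq_card_filter, natCast_card_filter]
  simp only [ite_gcd_eq_one_eq_sum_moebius _ (squarefree_Pz z).ne_zero]
  rw [sum_comm]
  refine sum_congr rfl fun d _ ↦ ?_
  rw [AP_eq_filter_dvd_gcdFloor, natCast_card_filter, mul_sum]
  simp only [mul_ite, mul_one, mul_zero]

lemma prod_one_sub_one_div_sq_eq_sum_moebius {N : ℕ} (hN : Squarefree N) :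
    ∏ p ∈ N.primeFactors, (1 - 1 / (p : ℝ) ^ 2) = ∑ d ∈ N.divisors, μ d * (1 / (d : ℝ) ^ 2) := by
  let f : ArithmeticFunction ℝ := ⟨fun d ↦ 1 / (d : ℝ) ^ 2, by simp⟩
  have hf : f.IsMultiplicative := by
    refine ⟨by simp [f], fun {m n} _ ↦ ?_⟩
    simp [f, mul_pow, mul_comm]
  exact hf.prodPrimeFactors_one_sub_of_squarefree f hN

lemma tendsto_S2_div {P : Polynomial ℝ} (hP : ¬ IsLiouvilleReal (P.coeff 1)) (z : ℝ) :
    Tendsto (fun X : ℝ ↦ (S2 P X z : ℝ) / X) atTop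
      (𝓝 (∏ p ∈ primesLt z, (1 - 1 / (p : ℝ) ^ 2))) := by
  rw [← primeFactors_Pz, prod_one_sub_one_div_sq_eq_sum_moebius (squarefree_Pz z)]
  have hsum (X : ℝ) :
      (S2 P X z : ℝ) / X = ∑ d ∈ (Pz z).divisors, μ d * (#(AP P d X) / X : ℝ) := by
    rw [← Int.cast_natCast, S2_eq_sum_moebius, Int.cast_sum, sum_div]
    push_cast
    simp only [mul_div_assoc]
  simp only [hsum]
  exact tendsto_finsetSum _ fun d hd ↦
    (tendsto_card_AP_div hP (Nat.pos_of_mem_divisors hd).ne').const_mul _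

lemma tendsto_prod_primesLt_one_sub_one_div_sq :
    Tendsto (fun n : ℕ ↦ ∏ p ∈ primesLt n, (1 - 1 / (p : ℝ) ^ 2)) atTop (𝓝 (6 / π ^ 2)) := by
  have hprod (n : ℕ) : (∏ p ∈ n.primesBelow, (1 - (p : ℂ) ^ (-2 : ℂ))⁻¹)⁻¹ =
      ((∏ p ∈ primesLt n, (1 - 1 / (p : ℝ) ^ 2) : ℝ) : ℂ) := by
    rw [primesLt_natCast, prod_inv_distrib, inv_inv]
    push_cast
    simp only [Complex.cpow_neg, Complex.cpow_ofNat, one_div]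
  have hlim : ((6 / π ^ 2 : ℝ) : ℂ) = (riemannZeta 2)⁻¹ := by
    rw [riemannZeta_two, inv_div]
    push_cast
    rfl
  have heuler := (riemannZeta_eulerProduct (s := 2) (by norm_num)).inv₀
    (riemannZeta_ne_zero_of_one_le_re (by norm_num))
  simp only [hprod, ← hlim] at heuler
  exact Complex.continuous_re.continuousAt.tendsto.comp heuler

lemma S_le_S2 (P : Polynomial ℝ) (X z : ℝ) : S P X ≤ S2 P X z := by
  rw [S_eq_card_filter, S2_eq_card_filter]
  refine card_le_card (monotone_filter_right _ fun x _ hx ↦ ?_)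
  rw [hx, Nat.gcd_one_left]

lemma S2_le_S_add_sum_card_AP (P : Polynomial ℝ) (X : ℝ) (n : ℕ) :
    S2 P X n ≤ S P X + ∑ p ∈ Icc n ⌊X⌋₊ with p.Prime, #(AP P p X) := by
  rw [S_eq_card_filter, S2_eq_card_filter]
  refine (card_le_card fun x hx ↦ ?_).trans
    ((card_union_le _ ({p ∈ Icc n ⌊X⌋₊ | p.Prime}.biUnion fun p ↦ AP P p X)).trans
      (add_le_add_right card_biUnion_le _))
  rw [mem_filter, mem_Icc] at hx
  obtain ⟨⟨hx1, hxX⟩, hcoprime⟩ := hx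
  rw [mem_union, mem_filter, mem_Icc, or_iff_not_imp_left]
  intro hx
  obtain ⟨p, hp, hpg⟩ := Nat.exists_prime_and_dvd fun hg ↦ hx ⟨⟨hx1, hxX⟩, hg⟩
  have hpx : p ∣ x := by
    exact_mod_cast (Int.natCast_dvd_natCast.2 hpg).trans (Int.gcd_dvd_left _ _)
  have hnp : n ≤ p := by
    by_contra! hpn
    have hpP : p ∣ Pz n := dvd_prod_of_mem _ <| by
      rw [primesLt_natCast]
      exact Nat.mem_primesBelow.2 ⟨hpn, hp⟩
    exact Nat.not_coprime_of_dvd_of_dvd hp.one_lt hpg hpP hcoprime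
  rw [mem_biUnion]
  refine ⟨p, ?_, ?_⟩
  · exact mem_filter.2 ⟨mem_Icc.2 ⟨hnp, (Nat.le_of_dvd hx1 hpx).trans hxX⟩, hp⟩
  · rw [AP_eq_filter_dvd_gcdFloor]
    exact mem_filter.2 ⟨mem_Icc.2 ⟨hx1, hxX⟩, hpg⟩

lemma eventually_eventually_dist_S_div_S2_div_le {P : Polynomial ℝ}
    (hP : ¬ IsLiouvilleReal (P.coeff 1)) {ε : ℝ} (hε : 0 < ε) :
    ∀ᶠ n : ℕ in atTop, ∀ᶠ X : ℝ in atTop, dist ((S P X : ℝ) / X) ((S2 P X n : ℝ) / X) ≤ ε := by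
  filter_upwards [eventually_eventually_sum_card_AP_le hP hε] with n hn
  filter_upwards [hn, eventually_gt_atTop 0] with X hlarge hX
  have hlower : (S P X : ℝ) ≤ S2 P X n := by exact_mod_cast S_le_S2 P X n
  have hupper : (S2 P X n : ℝ) ≤ S P X + ∑ p ∈ Icc n ⌊X⌋₊ with p.Prime, (#(AP P p X) : ℝ) := by
    exact_mod_cast S2_le_S_add_sum_card_AP P X n
  rw [dist_comm, Real.dist_eq, ← sub_div, abs_of_nonneg (div_nonneg (sub_nonneg.2 hlower) hX.le),
    div_le_iff₀ hX]
  linarith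

end Sieve

/-- If the coefficient of `x` in `P` is non-Liouville, then `S(X)/X → 6/π²` as `X → ∞`. -/
theorem statement1 (P : Polynomial ℝ) (hP : ¬ IsLiouvilleReal (P.coeff 1)) :
    Filter.Tendsto (fun X : ℝ => (S P X : ℝ) / X) Filter.atTop (nhds (6 / π ^ 2)) := by
  refine Metric.tendsto_nhds.2 fun ε hε ↦ ?_
  have hε3 : 0 < ε / 3 := by positivity
  obtain ⟨n, hsieve, heuler⟩ := ((eventually_eventually_dist_S_div_S2_div_le hP hε3).and
    (Metric.tendsto_nhds.1 tendsto_prod_primesLt_one_sub_one_div_sq _ hε3)).exists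
  filter_upwards [hsieve, Metric.tendsto_nhds.1 (tendsto_S2_div hP n) _ hε3] with X hS hS2
  calc dist ((S P X : ℝ) / X) (6 / π ^ 2)
      ≤ dist ((S P X : ℝ) / X) ((S2 P X n : ℝ) / X) +
          dist ((S2 P X n : ℝ) / X) (∏ p ∈ primesLt n, (1 - 1 / (p : ℝ) ^ 2)) +
          dist (∏ p ∈ primesLt n, (1 - 1 / (p : ℝ) ^ 2)) (6 / π ^ 2) := dist_triangle4 _ _ _ _
    _ < ε := by linarith
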